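/- arXiv:2307.13480 — 2 statements merged into one kernel-verified Lean document; each statement's English description precedes it below -/
import Mathlib

section
/- Let |GHZ⟩ = (|000⟩ + |111⟩)/√2 in (C²)^⊗3. For every triangle network state with local channels on three qubits, i.e. every state of the form ρ = (E_A ⊗ E_B ⊗ E_C)(ρ_b ⊗ ρ_c ⊗ ρ_a) for some d ≥ 1, density matrices ρ_a, ρ_b, ρ_c on C^d ⊗ C^d and quantum channels E_A, E_B, E_C from (C^d ⊗ C^d)-matrices to 2×2 matrices (with the tensor factors arranged in the basic triangle network ordering), the fidelity to the GHZ state is bounded as ⟨GHZ| ρ |GHZ⟩ ≤ 3 − √5. -/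
open Matrix Kronecker BigOperators
open scoped ComplexOrder

noncomputable section

/-- Covariance matrix of a family of observables `M` in the state `ρ`. -/
def covMat {n ι : Type*} [Fintype n] (M : ι → Matrix n n ℂ) (ρ : Matrix n n ℂ) :
    Matrix ι ι ℂ :=
  Matrix.of fun i j => (M i * M j * ρ).trace - (M i * ρ).trace * (M j * ρ).trace

/-- A density matrix: positive semidefinite with unit trace. -/
def IsDensity {n : Type*} [Fintype n] (ρ : Matrix n n ℂ) : Prop :=
  ρ.PosSemidef ∧ ρ.trace = 1

/-- Partial trace over the first tensor factor. -/
def ptrace₁ {m n : Type*} [Fintype m] (M : Matrix (m × n) (m × n) ℂ) : Matrix n n ℂ :=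
  Matrix.of fun i j => ∑ k, M (k, i) (k, j)

/-- Partial trace over the second tensor factor. -/
def ptrace₂ {m n : Type*} [Fintype n] (M : Matrix (m × n) (m × n) ℂ) : Matrix m m ℂ :=
  Matrix.of fun i j => ∑ k, M (i, k) (j, k)

/-- Index of a two-qudit space. -/
abbrev D2 (d : ℕ) := Fin d × Fin d

/-- Index of the six-factor triangle-network space, ordered C₂, A₁, A₂, B₁, B₂, C₁. -/
abbrev TriIdx (d : ℕ) := D2 d × (D2 d × D2 d)

/-- The basic triangle network state `ρ_b ⊗ ρ_c ⊗ ρ_a`. -/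
def btnState {d : ℕ} (ρa ρb ρc : Matrix (D2 d) (D2 d) ℂ) :
    Matrix (TriIdx d) (TriIdx d) ℂ :=
  ρb ⊗ₖ (ρc ⊗ₖ ρa)

/-- Embed an observable of Alice (acting on A₁A₂) into the global space. -/
def embedA {d : ℕ} (M : Matrix (D2 d) (D2 d) ℂ) : Matrix (TriIdx d) (TriIdx d) ℂ :=
  Matrix.of fun p q =>
    if p.1.1 = q.1.1 ∧ p.2.1.2 = q.2.1.2 ∧ p.2.2 = q.2.2
    then M (p.1.2, p.2.1.1) (q.1.2, q.2.1.1) else 0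

/-- Embed an observable of Bob (acting on B₁B₂) into the global space. -/
def embedB {d : ℕ} (M : Matrix (D2 d) (D2 d) ℂ) : Matrix (TriIdx d) (TriIdx d) ℂ :=
  Matrix.of fun p q =>
    if p.1 = q.1 ∧ p.2.1.1 = q.2.1.1 ∧ p.2.2.2 = q.2.2.2
    then M (p.2.1.2, p.2.2.1) (q.2.1.2, q.2.2.1) else 0

/-- Embed an observable of Charlie (acting on C₁C₂) into the global space. -/
def embedC {d : ℕ} (M : Matrix (D2 d) (D2 d) ℂ) : Matrix (TriIdx d) (TriIdx d) ℂ :=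
  Matrix.of fun p q =>
    if p.1.2 = q.1.2 ∧ p.2.1 = q.2.1 ∧ p.2.2.1 = q.2.2.1
    then M (p.2.2.2, p.1.1) (q.2.2.2, q.1.1) else 0

section marginals
variable {d : ℕ} (ρa ρb ρc : Matrix (D2 d) (D2 d) ℂ)

/-- Marginal of ρ_BTN on A₁ (second factor of ρ_b = ρ^{C₂A₁}). -/
def margA1 : Matrix (Fin d) (Fin d) ℂ := ptrace₁ ρb
/-- Marginal on C₂. -/
def margC2 : Matrix (Fin d) (Fin d) ℂ := ptrace₂ ρb
/-- Marginal on A₂ (first factor of ρ_c = ρ^{A₂B₁}). -/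
def margA2 : Matrix (Fin d) (Fin d) ℂ := ptrace₂ ρc
/-- Marginal on B₁. -/
def margB1 : Matrix (Fin d) (Fin d) ℂ := ptrace₁ ρc
/-- Marginal on B₂ (first factor of ρ_a = ρ^{B₂C₁}). -/
def margB2 : Matrix (Fin d) (Fin d) ℂ := ptrace₂ ρa
/-- Marginal on C₁. -/
def margC1 : Matrix (Fin d) (Fin d) ℂ := ptrace₁ ρa

/-- Reduced observable A^(2) = tr_{A₁}(A (ρ^{A₁} ⊗ 1)). -/
def redA2 (M : Matrix (D2 d) (D2 d) ℂ) : Matrix (Fin d) (Fin d) ℂ :=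
  ptrace₁ (M * (margA1 ρb ⊗ₖ (1 : Matrix (Fin d) (Fin d) ℂ)))
/-- Reduced observable A^(1) = tr_{A₂}(A (1 ⊗ ρ^{A₂})). -/
def redA1 (M : Matrix (D2 d) (D2 d) ℂ) : Matrix (Fin d) (Fin d) ℂ :=
  ptrace₂ (M * ((1 : Matrix (Fin d) (Fin d) ℂ) ⊗ₖ margA2 ρc))
/-- Reduced observable B^(1) = tr_{B₂}(B (1 ⊗ ρ^{B₂})). -/
def redB1 (M : Matrix (D2 d) (D2 d) ℂ) : Matrix (Fin d) (Fin d) ℂ :=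
  ptrace₂ (M * ((1 : Matrix (Fin d) (Fin d) ℂ) ⊗ₖ margB2 ρa))
/-- Reduced observable B^(2) = tr_{B₁}(B (ρ^{B₁} ⊗ 1)). -/
def redB2 (M : Matrix (D2 d) (D2 d) ℂ) : Matrix (Fin d) (Fin d) ℂ :=
  ptrace₁ (M * (margB1 ρc ⊗ₖ (1 : Matrix (Fin d) (Fin d) ℂ)))
/-- Reduced observable C^(1) = tr_{C₂}(C (1 ⊗ ρ^{C₂})); here C acts on C₁C₂. -/
def redC1 (M : Matrix (D2 d) (D2 d) ℂ) : Matrix (Fin d) (Fin d) ℂ :=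
  ptrace₂ (M * ((1 : Matrix (Fin d) (Fin d) ℂ) ⊗ₖ margC2 ρb))
/-- Reduced observable C^(2) = tr_{C₁}(C (ρ^{C₁} ⊗ 1)). -/
def redC2 (M : Matrix (D2 d) (D2 d) ℂ) : Matrix (Fin d) (Fin d) ℂ :=
  ptrace₁ (M * (margC1 ρa ⊗ₖ (1 : Matrix (Fin d) (Fin d) ℂ)))

end marginals


/-- The global Kraus operator `K_A ⊗ K_B ⊗ K_C`, mapping the six-factor
triangle-network space (ordered C₂, A₁, A₂, B₁, B₂, C₁) to the output space
of the three parties. -/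
def globalKraus {d nA nB nC : ℕ}
    (KA : Matrix (Fin nA) (D2 d) ℂ) (KB : Matrix (Fin nB) (D2 d) ℂ)
    (KC : Matrix (Fin nC) (D2 d) ℂ) :
    Matrix (Fin nA × Fin nB × Fin nC) (TriIdx d) ℂ :=
  Matrix.of fun o i =>
    KA o.1 (i.1.2, i.2.1.1) * KB o.2.1 (i.2.1.2, i.2.2.1) * KC o.2.2 (i.2.2.2, i.1.1)

/-- The triangle network state with local channels,
`(E_A ⊗ E_B ⊗ E_C)(ρ_BTN)`, with the channels given by Kraus operators. -/
def ctnState {d nA nB nC LA LB LC : ℕ}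
    (ρa ρb ρc : Matrix (D2 d) (D2 d) ℂ)
    (KA : Fin LA → Matrix (Fin nA) (D2 d) ℂ)
    (KB : Fin LB → Matrix (Fin nB) (D2 d) ℂ)
    (KC : Fin LC → Matrix (Fin nC) (D2 d) ℂ) :
    Matrix (Fin nA × Fin nB × Fin nC) (Fin nA × Fin nB × Fin nC) ℂ :=
  ∑ l, ∑ m, ∑ n,
    globalKraus (KA l) (KB m) (KC n) * btnState ρa ρb ρc *
      (globalKraus (KA l) (KB m) (KC n))ᴴ

/-- Embed an observable of Alice into the tripartite output space. -/
def outA {nA nB nC : ℕ} (M : Matrix (Fin nA) (Fin nA) ℂ) :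
    Matrix (Fin nA × Fin nB × Fin nC) (Fin nA × Fin nB × Fin nC) ℂ :=
  M ⊗ₖ (1 : Matrix (Fin nB × Fin nC) (Fin nB × Fin nC) ℂ)

/-- Embed an observable of Bob into the tripartite output space. -/
def outB {nA nB nC : ℕ} (M : Matrix (Fin nB) (Fin nB) ℂ) :
    Matrix (Fin nA × Fin nB × Fin nC) (Fin nA × Fin nB × Fin nC) ℂ :=
  Matrix.of fun p q => if p.1 = q.1 ∧ p.2.2 = q.2.2 then M p.2.1 q.2.1 else 0

/-- Embed an observable of Charlie into the tripartite output space. -/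
def outC {nA nB nC : ℕ} (M : Matrix (Fin nC) (Fin nC) ℂ) :
    Matrix (Fin nA × Fin nB × Fin nC) (Fin nA × Fin nB × Fin nC) ℂ :=
  (1 : Matrix (Fin nA) (Fin nA) ℂ) ⊗ₖ ((1 : Matrix (Fin nB) (Fin nB) ℂ) ⊗ₖ M)

/-- The three-qubit GHZ state vector `(|000⟩ + |111⟩)/√2`. -/
def ghzVec : Fin 2 × Fin 2 × Fin 2 → ℂ := fun i =>
  if i = (0, 0, 0) ∨ i = (1, 1, 1) then ((Real.sqrt 2)⁻¹ : ℝ) else 0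

/-- The GHZ state mixed with white noise, `v |GHZ⟩⟨GHZ| + (1−v) 1/8`. -/
def ghzNoisy (v : ℝ) : Matrix (Fin 2 × Fin 2 × Fin 2) (Fin 2 × Fin 2 × Fin 2) ℂ :=
  (v : ℂ) • vecMulVec ghzVec (star ghzVec) +
    ((1 - v : ℝ) : ℂ) • ((8 : ℂ)⁻¹ • (1 : Matrix (Fin 2 × Fin 2 × Fin 2) (Fin 2 × Fin 2 × Fin 2) ℂ))

/-!
In the Heisenberg picture the channels turn the parties' observables into observables on the
triangle space, and by Kadison–Schwarz this can only lower variances. The two sources feeding a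
party are independent, so (Efron–Stein) the variance of its observable is at least the sum of the
variances of the two conditional expectations onto these sources. Two parties share a single source,
so the covariance of their observables is that of the conditional expectations onto it, hence at
most half the sum of the two variances there. Summing over the triangle, the three pairwise
covariances add up to at most half the sum of the three variances.

For the Pauli observable `Z` of every party this bounds the population `P` of `|000⟩` and `|111⟩`
by `5/8 + s²/24`, where `s` is the total polarization. A large `P` therefore forces `|000⟩` and
`|111⟩` to be unequally populated, which costs coherence between them. Together these keep the
fidelity at most `2/3`, which is smaller than `3 - √5`.
-/

section Covariance

variable {n : Type*} [Fintype n] {ρ X : Matrix n n ℂ}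

/-- The covariance `⟨XY⟩ - ⟨X⟩⟨Y⟩` of two observables in the state `ρ`, that is, an entry of the
covariance matrix `covMat` of the family of all observables. -/
def obsCov (ρ X Y : Matrix n n ℂ) : ℂ := covMat id ρ X Y

/-- The variance of an observable in the state `ρ`. It is real-valued because the covariance of a
Hermitian observable with itself is a real number. -/
def obsVar (ρ X : Matrix n n ℂ) : ℝ := (obsCov ρ X X).re

lemma obsCov_apply (ρ X Y : Matrix n n ℂ) :
    obsCov ρ X Y = (X * Y * ρ).trace - (X * ρ).trace * (Y * ρ).trace := rfl

lemma obsCov_sub_left (ρ X X' Y : Matrix n n ℂ) :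
    obsCov ρ (X - X') Y = obsCov ρ X Y - obsCov ρ X' Y := by
  simp only [obsCov_apply, sub_mul, trace_sub]
  ring

lemma obsCov_sub_right (ρ X Y Y' : Matrix n n ℂ) :
    obsCov ρ X (Y - Y') = obsCov ρ X Y - obsCov ρ X Y' := by
  simp only [obsCov_apply, mul_sub, sub_mul, trace_sub]
  ring

open scoped MatrixOrder in
lemma trace_mul_nonneg (hX : X.PosSemidef) (hρ : ρ.PosSemidef) : 0 ≤ (X * ρ).trace := by
  classical
  obtain ⟨S, rfl⟩ := CStarAlgebra.nonneg_iff_eq_star_mul_self.mp hρ.nonneg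
  have h := (hX.mul_mul_conjTranspose_same S).trace_nonneg
  rwa [trace_mul_cycle, ← star_eq_conjTranspose, trace_mul_comm] at h

lemma conj_trace_mul (hX : X.IsHermitian) (hρ : ρ.IsHermitian) :
    starRingEnd ℂ (X * ρ).trace = (X * ρ).trace := by
  rw [starRingEnd_apply, ← trace_conjTranspose, conjTranspose_mul, hX.eq, hρ.eq, trace_mul_comm]

lemma obsVar_nonneg (hρ : IsDensity ρ) (hX : X.IsHermitian) : 0 ≤ obsVar ρ X := by
  classical
  set x := (X * ρ).trace with hx
  have hcentred : (X - x • 1).IsHermitian :=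
    hX.sub (by simp [IsHermitian, conjTranspose_smul, hx, conj_trace_mul hX hρ.1.1])
  have hsq : ((X - x • 1)ᴴ * (X - x • 1) * ρ).trace = obsCov ρ X X := by
    simp only [hcentred.eq, obsCov_apply, sub_mul, mul_sub, smul_mul_assoc, mul_smul_comm, one_mul,
      mul_one, trace_sub, trace_smul, ← hx, hρ.2, smul_eq_mul]
    ring
  exact (Complex.nonneg_iff.mp
    (hsq ▸ trace_mul_nonneg (posSemidef_conjTranspose_mul_self (X - x • 1)) hρ.1)).1

end Covariance

section PartialTrace

variable {m n : Type*}

@[elab_as_elim]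
lemma kronecker_induction [Finite m] [Finite n] {motive : Matrix (m × n) (m × n) ℂ → Prop}
    (M : Matrix (m × n) (m × n) ℂ) (zero : motive 0)
    (add : ∀ M N, motive M → motive N → motive (M + N))
    (kronecker : ∀ (A : Matrix m m ℂ) (B : Matrix n n ℂ), motive (A ⊗ₖ B)) : motive M := by
  classical
  refine Matrix.induction_on' M zero add fun i j x => ?_
  rw [← mul_one x, ← single_kronecker_single]
  exact kronecker _ _

lemma ptrace₁_zero [Fintype m] : ptrace₁ (0 : Matrix (m × n) (m × n) ℂ) = 0 := by
  ext; simp [ptrace₁]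

lemma ptrace₂_zero [Fintype n] : ptrace₂ (0 : Matrix (m × n) (m × n) ℂ) = 0 := by
  ext; simp [ptrace₂]

lemma ptrace₁_add [Fintype m] (M N : Matrix (m × n) (m × n) ℂ) :
    ptrace₁ (M + N) = ptrace₁ M + ptrace₁ N := by
  ext; simp [ptrace₁, Finset.sum_add_distrib]

lemma ptrace₂_add [Fintype n] (M N : Matrix (m × n) (m × n) ℂ) :
    ptrace₂ (M + N) = ptrace₂ M + ptrace₂ N := by
  ext; simp [ptrace₂, Finset.sum_add_distrib]

lemma ptrace₁_kronecker [Fintype m] (A : Matrix m m ℂ) (B : Matrix n n ℂ) :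
    ptrace₁ (A ⊗ₖ B) = A.trace • B := by
  ext; simp [ptrace₁, Matrix.trace, Finset.sum_mul]

lemma ptrace₂_kronecker [Fintype n] (A : Matrix m m ℂ) (B : Matrix n n ℂ) :
    ptrace₂ (A ⊗ₖ B) = B.trace • A := by
  ext; simp [ptrace₂, Matrix.trace, ← Finset.mul_sum, mul_comm]

lemma conjTranspose_ptrace₁ [Fintype m] (M : Matrix (m × n) (m × n) ℂ) :
    (ptrace₁ M)ᴴ = ptrace₁ Mᴴ := by
  ext; simp [ptrace₁]

lemma conjTranspose_ptrace₂ [Fintype n] (M : Matrix (m × n) (m × n) ℂ) :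
    (ptrace₂ M)ᴴ = ptrace₂ Mᴴ := by
  ext; simp [ptrace₂]

lemma isHermitian_kronecker_one [DecidableEq n] {N : Matrix m m ℂ} (hN : N.IsHermitian) :
    (N ⊗ₖ (1 : Matrix n n ℂ)).IsHermitian := by
  rw [IsHermitian, conjTranspose_kronecker, hN.eq, conjTranspose_one]

lemma isHermitian_one_kronecker [DecidableEq m] {L : Matrix n n ℂ} (hL : L.IsHermitian) :
    ((1 : Matrix m m ℂ) ⊗ₖ L).IsHermitian := by
  rw [IsHermitian, conjTranspose_kronecker, hL.eq, conjTranspose_one]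

lemma ptrace₁_eq_sum_submatrix [Fintype m] (M : Matrix (m × n) (m × n) ℂ) :
    ptrace₁ M = ∑ k, M.submatrix (k, ·) (k, ·) := by
  ext; simp [ptrace₁, Matrix.sum_apply]

lemma ptrace₂_eq_sum_submatrix [Fintype n] (M : Matrix (m × n) (m × n) ℂ) :
    ptrace₂ M = ∑ k, M.submatrix (·, k) (·, k) := by
  ext; simp [ptrace₂, Matrix.sum_apply]

variable [Fintype m] [Fintype n]

lemma trace_ptrace₁ (M : Matrix (m × n) (m × n) ℂ) : (ptrace₁ M).trace = M.trace := by
  simp [ptrace₁, Matrix.trace, Fintype.sum_prod_type_right]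

lemma trace_ptrace₂ (M : Matrix (m × n) (m × n) ℂ) : (ptrace₂ M).trace = M.trace := by
  simp [ptrace₂, Matrix.trace, Fintype.sum_prod_type]

lemma IsDensity.ptrace₁ {ρ : Matrix (m × n) (m × n) ℂ} (hρ : IsDensity ρ) :
    IsDensity (ptrace₁ ρ) :=
  ⟨ptrace₁_eq_sum_submatrix ρ ▸ posSemidef_sum _ fun k _ => hρ.1.submatrix (k, ·),
    by rw [trace_ptrace₁, hρ.2]⟩

lemma IsDensity.ptrace₂ {ρ : Matrix (m × n) (m × n) ℂ} (hρ : IsDensity ρ) :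
    IsDensity (ptrace₂ ρ) :=
  ⟨ptrace₂_eq_sum_submatrix ρ ▸ posSemidef_sum _ fun k _ => hρ.1.submatrix (·, k),
    by rw [trace_ptrace₂, hρ.2]⟩

lemma IsDensity.kronecker {σ : Matrix m m ℂ} {τ : Matrix n n ℂ} (hσ : IsDensity σ)
    (hτ : IsDensity τ) : IsDensity (σ ⊗ₖ τ) :=
  ⟨hσ.1.kronecker hτ.1, by rw [trace_kronecker, hσ.2, hτ.2, one_mul]⟩

lemma ptrace₁_mul_one_kronecker [DecidableEq m] (M : Matrix (m × n) (m × n) ℂ) (N : Matrix n n ℂ) :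
    ptrace₁ (M * (1 ⊗ₖ N)) = ptrace₁ M * N := by
  induction M using kronecker_induction with
  | zero => simp [ptrace₁_zero]
  | add M M' hM hM' => simp [add_mul, ptrace₁_add, hM, hM']
  | kronecker A B => simp [← mul_kronecker_mul, ptrace₁_kronecker]

lemma ptrace₁_one_kronecker_mul [DecidableEq m] (M : Matrix (m × n) (m × n) ℂ) (N : Matrix n n ℂ) :
    ptrace₁ ((1 ⊗ₖ N) * M) = N * ptrace₁ M := by
  induction M using kronecker_induction with
  | zero => simp [ptrace₁_zero]
  | add M M' hM hM' => simp [mul_add, ptrace₁_add, hM, hM']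
  | kronecker A B => simp [← mul_kronecker_mul, ptrace₁_kronecker]

lemma ptrace₂_mul_kronecker_one [DecidableEq n] (M : Matrix (m × n) (m × n) ℂ) (N : Matrix m m ℂ) :
    ptrace₂ (M * (N ⊗ₖ 1)) = ptrace₂ M * N := by
  induction M using kronecker_induction with
  | zero => simp [ptrace₂_zero]
  | add M M' hM hM' => simp [add_mul, ptrace₂_add, hM, hM']
  | kronecker A B => simp [← mul_kronecker_mul, ptrace₂_kronecker]

lemma ptrace₂_kronecker_one_mul [DecidableEq n] (M : Matrix (m × n) (m × n) ℂ) (N : Matrix m m ℂ) :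
    ptrace₂ ((N ⊗ₖ 1) * M) = N * ptrace₂ M := by
  induction M using kronecker_induction with
  | zero => simp [ptrace₂_zero]
  | add M M' hM hM' => simp [mul_add, ptrace₂_add, hM, hM']
  | kronecker A B => simp [← mul_kronecker_mul, ptrace₂_kronecker]

lemma ptrace₁_kronecker_one_mul_comm [DecidableEq n] (M : Matrix (m × n) (m × n) ℂ)
    (σ : Matrix m m ℂ) :
    ptrace₁ ((σ ⊗ₖ 1) * M) = ptrace₁ (M * (σ ⊗ₖ 1)) := by
  induction M using kronecker_induction with
  | zero => simp
  | add M M' hM hM' => simp [mul_add, add_mul, ptrace₁_add, hM, hM']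
  | kronecker A B => simp [← mul_kronecker_mul, ptrace₁_kronecker, trace_mul_comm σ]

lemma ptrace₂_one_kronecker_mul_comm [DecidableEq m] (M : Matrix (m × n) (m × n) ℂ)
    (τ : Matrix n n ℂ) :
    ptrace₂ ((1 ⊗ₖ τ) * M) = ptrace₂ (M * (1 ⊗ₖ τ)) := by
  induction M using kronecker_induction with
  | zero => simp
  | add M M' hM hM' => simp [mul_add, add_mul, ptrace₂_add, hM, hM']
  | kronecker A B => simp [← mul_kronecker_mul, ptrace₂_kronecker, trace_mul_comm τ]

lemma trace_kronecker_one_mul [DecidableEq n] (N : Matrix m m ℂ) (ρ : Matrix (m × n) (m × n) ℂ) :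
    ((N ⊗ₖ 1) * ρ).trace = (N * ptrace₂ ρ).trace := by
  rw [← trace_ptrace₂, ptrace₂_kronecker_one_mul]

lemma trace_one_kronecker_mul [DecidableEq m] (L : Matrix n n ℂ) (ρ : Matrix (m × n) (m × n) ℂ) :
    ((1 ⊗ₖ L) * ρ).trace = (L * ptrace₁ ρ).trace := by
  rw [← trace_ptrace₁, ptrace₁_one_kronecker_mul]

lemma two_mul_re_obsCov_kronecker_one_le [DecidableEq m] [DecidableEq n]
    {ρ : Matrix (m × n) (m × n) ℂ} (hρ : IsDensity ρ) {N : Matrix m m ℂ} {L : Matrix n n ℂ}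
    (hN : N.IsHermitian) (hL : L.IsHermitian) :
    2 * (obsCov ρ (N ⊗ₖ 1) (1 ⊗ₖ L)).re ≤ obsVar (ptrace₂ ρ) N + obsVar (ptrace₁ ρ) L := by
  have hdiff := obsVar_nonneg hρ
    ((isHermitian_kronecker_one (n := n) hN).sub (isHermitian_one_kronecker (m := m) hL))
  have hcomm : obsCov ρ (1 ⊗ₖ L) (N ⊗ₖ 1) = obsCov ρ (N ⊗ₖ 1) (1 ⊗ₖ L) := by
    simp only [obsCov_apply, ← mul_kronecker_mul, one_mul, mul_one]
    rw [mul_comm (trace _)]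
  have hN_marginal : obsCov ρ (N ⊗ₖ 1) (N ⊗ₖ 1) = obsCov (ptrace₂ ρ) N N := by
    simp only [obsCov_apply, ← mul_kronecker_mul, one_mul, trace_kronecker_one_mul]
  have hL_marginal : obsCov ρ (1 ⊗ₖ L) (1 ⊗ₖ L) = obsCov (ptrace₁ ρ) L L := by
    simp only [obsCov_apply, ← mul_kronecker_mul, one_mul, trace_one_kronecker_mul]
  simp only [obsVar, obsCov_sub_left, obsCov_sub_right, hcomm, hN_marginal, hL_marginal,
    Complex.sub_re] at hdiff ⊢
  linarith

end PartialTrace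

section ReducedObservable

variable {m n : Type*} [Fintype m] [Fintype n]

/-- The observable on the first factor obtained by averaging `X` over the state `τ` of the second,
as in `redA1`, `redB1` and `redC1`. It plays the role of a conditional expectation. -/
def red₁ [DecidableEq m] (τ : Matrix n n ℂ) (X : Matrix (m × n) (m × n) ℂ) : Matrix m m ℂ :=
  ptrace₂ (X * (1 ⊗ₖ τ))

/-- The observable on the second factor obtained by averaging `X` over the state `σ` of the first,
as in `redA2`, `redB2` and `redC2`. It plays the role of a conditional expectation. -/
def red₂ [DecidableEq n] (σ : Matrix m m ℂ) (X : Matrix (m × n) (m × n) ℂ) : Matrix n n ℂ :=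
  ptrace₁ (X * (σ ⊗ₖ 1))

variable {σ : Matrix m m ℂ} {τ : Matrix n n ℂ} {X : Matrix (m × n) (m × n) ℂ}

lemma trace_mul_kronecker_eq_red₁ [DecidableEq m] (X : Matrix (m × n) (m × n) ℂ) (σ : Matrix m m ℂ)
    (τ : Matrix n n ℂ) : (X * (σ ⊗ₖ τ)).trace = (red₁ τ X * σ).trace := by
  classical
  rw [red₁, ← ptrace₂_mul_kronecker_one, trace_ptrace₂, mul_assoc, ← mul_kronecker_mul, one_mul,
    mul_one]

lemma trace_mul_kronecker_eq_red₂ [DecidableEq n] (X : Matrix (m × n) (m × n) ℂ) (σ : Matrix m m ℂ)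
    (τ : Matrix n n ℂ) : (X * (σ ⊗ₖ τ)).trace = (red₂ σ X * τ).trace := by
  classical
  rw [red₂, ← ptrace₁_mul_one_kronecker, trace_ptrace₁, mul_assoc, ← mul_kronecker_mul, one_mul,
    mul_one]

lemma red₁_kronecker [DecidableEq m] (τ : Matrix n n ℂ) (A : Matrix m m ℂ) (B : Matrix n n ℂ) :
    red₁ τ (A ⊗ₖ B) = (B * τ).trace • A := by
  rw [red₁, ← mul_kronecker_mul, ptrace₂_kronecker, mul_one]

lemma red₂_kronecker [DecidableEq n] (σ : Matrix m m ℂ) (A : Matrix m m ℂ) (B : Matrix n n ℂ) :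
    red₂ σ (A ⊗ₖ B) = (A * σ).trace • B := by
  rw [red₂, ← mul_kronecker_mul, ptrace₁_kronecker, mul_one]

lemma red₁_one [DecidableEq m] [DecidableEq n] (hτ : τ.trace = 1) :
    red₁ τ (1 : Matrix (m × n) (m × n) ℂ) = 1 := by
  rw [← one_kronecker_one, red₁_kronecker, one_mul, hτ, one_smul]

lemma red₂_one [DecidableEq m] [DecidableEq n] (hσ : σ.trace = 1) :
    red₂ σ (1 : Matrix (m × n) (m × n) ℂ) = 1 := by
  rw [← one_kronecker_one, red₂_kronecker, one_mul, hσ, one_smul]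

lemma red₁_kronecker_one_mul [DecidableEq m] [DecidableEq n] (τ : Matrix n n ℂ) (N : Matrix m m ℂ)
    (X : Matrix (m × n) (m × n) ℂ) : red₁ τ ((N ⊗ₖ 1) * X) = N * red₁ τ X := by
  rw [red₁, mul_assoc, ptrace₂_kronecker_one_mul, red₁]

lemma red₁_mul_kronecker_one [DecidableEq m] [DecidableEq n] (τ : Matrix n n ℂ)
    (X : Matrix (m × n) (m × n) ℂ) (N : Matrix m m ℂ) :
    red₁ τ (X * (N ⊗ₖ 1)) = red₁ τ X * N := by
  rw [red₁, ← ptrace₂_one_kronecker_mul_comm, ← mul_assoc, ptrace₂_mul_kronecker_one,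
    ptrace₂_one_kronecker_mul_comm, red₁]

lemma red₂_one_kronecker_mul [DecidableEq m] [DecidableEq n] (σ : Matrix m m ℂ) (L : Matrix n n ℂ)
    (X : Matrix (m × n) (m × n) ℂ) : red₂ σ ((1 ⊗ₖ L) * X) = L * red₂ σ X := by
  rw [red₂, mul_assoc, ptrace₁_one_kronecker_mul, red₂]

lemma red₂_mul_one_kronecker [DecidableEq m] [DecidableEq n] (σ : Matrix m m ℂ)
    (X : Matrix (m × n) (m × n) ℂ) (L : Matrix n n ℂ) :
    red₂ σ (X * (1 ⊗ₖ L)) = red₂ σ X * L := by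
  rw [red₂, ← ptrace₁_kronecker_one_mul_comm, ← mul_assoc, ptrace₁_mul_one_kronecker,
    ptrace₁_kronecker_one_mul_comm, red₂]

lemma isHermitian_red₁ [DecidableEq m] (hτ : τ.IsHermitian) (hX : X.IsHermitian) :
    (red₁ τ X).IsHermitian := by
  rw [IsHermitian, red₁, conjTranspose_ptrace₂, conjTranspose_mul, hX.eq,
    (isHermitian_one_kronecker hτ).eq, ptrace₂_one_kronecker_mul_comm]

lemma isHermitian_red₂ [DecidableEq n] (hσ : σ.IsHermitian) (hX : X.IsHermitian) :
    (red₂ σ X).IsHermitian := by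
  rw [IsHermitian, red₂, conjTranspose_ptrace₁, conjTranspose_mul, hX.eq,
    (isHermitian_kronecker_one hσ).eq, ptrace₁_kronecker_one_mul_comm]

lemma obsCov_kronecker_one_left [DecidableEq m] [DecidableEq n] (hτ : τ.trace = 1)
    (σ N : Matrix m m ℂ) (X : Matrix (m × n) (m × n) ℂ) :
    obsCov (σ ⊗ₖ τ) (N ⊗ₖ 1) X = obsCov σ N (red₁ τ X) := by
  simp only [obsCov_apply, trace_mul_kronecker_eq_red₁, red₁_kronecker_one_mul, red₁_kronecker,
    one_mul, hτ, one_smul]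

lemma obsCov_kronecker_one_right [DecidableEq m] [DecidableEq n] (hτ : τ.trace = 1)
    (σ N : Matrix m m ℂ) (X : Matrix (m × n) (m × n) ℂ) :
    obsCov (σ ⊗ₖ τ) X (N ⊗ₖ 1) = obsCov σ (red₁ τ X) N := by
  simp only [obsCov_apply, trace_mul_kronecker_eq_red₁, red₁_mul_kronecker_one, red₁_kronecker,
    one_mul, hτ, one_smul]

lemma obsCov_one_kronecker_left [DecidableEq m] [DecidableEq n] (hσ : σ.trace = 1)
    (τ L : Matrix n n ℂ) (X : Matrix (m × n) (m × n) ℂ) :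
    obsCov (σ ⊗ₖ τ) (1 ⊗ₖ L) X = obsCov τ L (red₂ σ X) := by
  simp only [obsCov_apply, trace_mul_kronecker_eq_red₂, red₂_one_kronecker_mul, red₂_kronecker,
    one_mul, hσ, one_smul]

lemma obsCov_one_kronecker_right [DecidableEq m] [DecidableEq n] (hσ : σ.trace = 1)
    (τ L : Matrix n n ℂ) (X : Matrix (m × n) (m × n) ℂ) :
    obsCov (σ ⊗ₖ τ) X (1 ⊗ₖ L) = obsCov τ (red₂ σ X) L := by
  simp only [obsCov_apply, trace_mul_kronecker_eq_red₂, red₂_mul_one_kronecker, red₂_kronecker,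
    one_mul, hσ, one_smul]

-- Efron-Stein: in a product state the two conditional expectations of `X` are uncorrelated, and
-- each has with `X` a covariance equal to its own variance.
lemma obsVar_red₂_add_obsVar_red₁_le [DecidableEq m] [DecidableEq n] (hσ : IsDensity σ)
    (hτ : IsDensity τ) (hX : X.IsHermitian) :
    obsVar τ (red₂ σ X) + obsVar σ (red₁ τ X) ≤ obsVar (σ ⊗ₖ τ) X := by
  have hred₁ : red₁ τ (red₁ τ X ⊗ₖ (1 : Matrix n n ℂ)) = red₁ τ X := by
    rw [red₁_kronecker, one_mul, hτ.2, one_smul]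
  have hred₂ : red₂ σ ((1 : Matrix m m ℂ) ⊗ₖ red₂ σ X) = red₂ σ X := by
    rw [red₂_kronecker, one_mul, hσ.2, one_smul]
  have huncorr (N : Matrix m m ℂ) (L : Matrix n n ℂ) :
      obsCov (σ ⊗ₖ τ) (N ⊗ₖ 1) (1 ⊗ₖ L) = 0 ∧ obsCov (σ ⊗ₖ τ) (1 ⊗ₖ L) (N ⊗ₖ 1) = 0 := by
    simp [obsCov_apply, ← mul_kronecker_mul, trace_kronecker, hσ.2, hτ.2, mul_comm]
  have hresidual := obsVar_nonneg (hσ.kronecker hτ)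
    ((hX.sub (isHermitian_kronecker_one (isHermitian_red₁ hτ.1.1 hX))).sub
      (isHermitian_one_kronecker (isHermitian_red₂ hσ.1.1 hX)))
  simp only [obsVar, obsCov_sub_left, obsCov_sub_right, huncorr] at hresidual ⊢
  simp only [obsCov_kronecker_one_left hτ.2, obsCov_kronecker_one_right hτ.2,
    obsCov_one_kronecker_left hσ.2, obsCov_one_kronecker_right hσ.2, hred₁, hred₂,
    Complex.sub_re, Complex.zero_re] at hresidual
  linarith

end ReducedObservable

section HeisenbergDual

variable {κ m n : Type*} [Fintype κ] [Fintype m]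

/-- The Heisenberg dual `M ↦ ∑ K†MK` of the channel `ρ ↦ ∑ KρK†` with Kraus operators `K`. -/
def krausDual (K : κ → Matrix m n ℂ) (M : Matrix m m ℂ) : Matrix n n ℂ :=
  ∑ l, (K l)ᴴ * M * K l

lemma krausDual_one [DecidableEq m] [DecidableEq n] {K : κ → Matrix m n ℂ}
    (hK : ∑ l, (K l)ᴴ * K l = 1) : krausDual K 1 = 1 := by
  simp only [krausDual, Matrix.mul_one, hK]

lemma isHermitian_krausDual (K : κ → Matrix m n ℂ) {M : Matrix m m ℂ} (hM : M.IsHermitian) :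
    (krausDual K M).IsHermitian := by
  simp only [krausDual, IsHermitian, conjTranspose_sum, conjTranspose_mul,
    conjTranspose_conjTranspose, hM.eq, Matrix.mul_assoc]

lemma posSemidef_krausDual_mul_self_sub [Fintype n] [DecidableEq n] {K : κ → Matrix m n ℂ}
    (hK : ∑ l, (K l)ᴴ * K l = 1) {M : Matrix m m ℂ} (hM : M.IsHermitian) :
    (krausDual K (M * M) - krausDual K M * krausDual K M).PosSemidef := by
  set X := krausDual K M with hX
  have hXherm : X.IsHermitian := isHermitian_krausDual K hM
  have hsum : krausDual K (M * M) - X * X = ∑ l, (M * K l - K l * X)ᴴ * (M * K l - K l * X) :=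
    calc krausDual K (M * M) - X * X
        = krausDual K (M * M) - krausDual K M * X - X * krausDual K M
            + X * (∑ l, (K l)ᴴ * K l) * X := by
          rw [hK, ← hX, Matrix.mul_one, sub_add_cancel]
      _ = ∑ l, (M * K l - K l * X)ᴴ * (M * K l - K l * X) := by
          simp only [krausDual, Finset.sum_mul, Finset.mul_sum, ← Finset.sum_sub_distrib,
            ← Finset.sum_add_distrib, conjTranspose_sub, conjTranspose_mul, hM.eq,
            hXherm.eq, Matrix.sub_mul, Matrix.mul_sub, Matrix.mul_assoc]
          exact Finset.sum_congr rfl fun l _ => by abel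
  exact hsum ▸ posSemidef_sum _ fun l _ => posSemidef_conjTranspose_mul_self _

end HeisenbergDual

section Triangle

variable {d : ℕ}

/-- The identification of the triangle space, ordered source by source as `C₂A₁, A₂B₁, B₂C₁`, with
the same space ordered party by party as `A₁A₂, B₁B₂, C₁C₂`. -/
def partyEquiv (d : ℕ) : TriIdx d ≃ D2 d × (D2 d × D2 d) where
  toFun i := ((i.1.2, i.2.1.1), (i.2.1.2, i.2.2.1), (i.2.2.2, i.1.1))
  invFun o := ((o.2.2.2, o.1.1), (o.1.2, o.2.1.1), (o.2.1.2, o.2.2.1))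

/-- The global observable `X ⊗ Y ⊗ Z` on the triangle space, where Alice measures `X`, Bob `Y` and
Charlie `Z`. -/
def triOp (X Y Z : Matrix (D2 d) (D2 d) ℂ) : Matrix (TriIdx d) (TriIdx d) ℂ :=
  (X ⊗ₖ (Y ⊗ₖ Z)).submatrix (partyEquiv d) (partyEquiv d)

/-- The correlation `⟨X ⊗ Y ⊗ Z⟩` in the basic triangle network state. -/
def triCorr (ρa ρb ρc X Y Z : Matrix (D2 d) (D2 d) ℂ) : ℂ :=
  (triOp X Y Z * btnState ρa ρb ρc).trace

lemma triOp_kronecker (X₁ X₂ Y₁ Y₂ Z₁ Z₂ : Matrix (Fin d) (Fin d) ℂ) :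
    triOp (X₁ ⊗ₖ X₂) (Y₁ ⊗ₖ Y₂) (Z₁ ⊗ₖ Z₂) = (Z₂ ⊗ₖ X₁) ⊗ₖ ((X₂ ⊗ₖ Y₁) ⊗ₖ (Y₂ ⊗ₖ Z₁)) := by
  ext i j
  simp only [triOp, partyEquiv, Equiv.coe_fn_mk, submatrix_apply, kroneckerMap_apply]
  ring

lemma triOp_one : triOp (1 : Matrix (D2 d) (D2 d) ℂ) 1 1 = 1 := by
  simp [triOp, submatrix_one_equiv]

variable (ρa ρb ρc : Matrix (D2 d) (D2 d) ℂ)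

lemma triCorr_kronecker (X₁ X₂ Y₁ Y₂ Z₁ Z₂ : Matrix (Fin d) (Fin d) ℂ) :
    triCorr ρa ρb ρc (X₁ ⊗ₖ X₂) (Y₁ ⊗ₖ Y₂) (Z₁ ⊗ₖ Z₂) =
      ((Z₂ ⊗ₖ X₁) * ρb).trace * (((X₂ ⊗ₖ Y₁) * ρc).trace * ((Y₂ ⊗ₖ Z₁) * ρa).trace) := by
  simp only [triCorr, btnState, triOp_kronecker, ← mul_kronecker_mul, trace_kronecker]

lemma triCorr_zero_left (Y Z : Matrix (D2 d) (D2 d) ℂ) : triCorr ρa ρb ρc 0 Y Z = 0 := by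
  simp [triCorr, triOp]

lemma triCorr_zero_middle (X Z : Matrix (D2 d) (D2 d) ℂ) : triCorr ρa ρb ρc X 0 Z = 0 := by
  simp [triCorr, triOp]

lemma triCorr_zero_right (X Y : Matrix (D2 d) (D2 d) ℂ) : triCorr ρa ρb ρc X Y 0 = 0 := by
  simp [triCorr, triOp]

lemma triCorr_add_left (X X' Y Z : Matrix (D2 d) (D2 d) ℂ) :
    triCorr ρa ρb ρc (X + X') Y Z = triCorr ρa ρb ρc X Y Z + triCorr ρa ρb ρc X' Y Z := by
  simp only [triCorr, triOp, add_kronecker, submatrix_add, Pi.add_apply, add_mul, trace_add]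

lemma triCorr_add_middle (X Y Y' Z : Matrix (D2 d) (D2 d) ℂ) :
    triCorr ρa ρb ρc X (Y + Y') Z = triCorr ρa ρb ρc X Y Z + triCorr ρa ρb ρc X Y' Z := by
  simp only [triCorr, triOp, add_kronecker, kronecker_add, submatrix_add, Pi.add_apply, add_mul,
    trace_add]

lemma triCorr_add_right (X Y Z Z' : Matrix (D2 d) (D2 d) ℂ) :
    triCorr ρa ρb ρc X Y (Z + Z') = triCorr ρa ρb ρc X Y Z + triCorr ρa ρb ρc X Y Z' := by
  simp only [triCorr, triOp, kronecker_add, submatrix_add, Pi.add_apply, add_mul, trace_add]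

lemma triCorr_cycle (X Y Z : Matrix (D2 d) (D2 d) ℂ) :
    triCorr ρa ρb ρc X Y Z = triCorr ρb ρc ρa Y Z X := by
  induction X using kronecker_induction with
  | zero => rw [triCorr_zero_left, triCorr_zero_right]
  | add X X' hX hX' => rw [triCorr_add_left, triCorr_add_right, hX, hX']
  | kronecker X₁ X₂ =>
    induction Y using kronecker_induction with
    | zero => rw [triCorr_zero_middle, triCorr_zero_left]
    | add Y Y' hY hY' => rw [triCorr_add_middle, triCorr_add_left, hY, hY']
    | kronecker Y₁ Y₂ =>
      induction Z using kronecker_induction with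
      | zero => rw [triCorr_zero_right, triCorr_zero_middle]
      | add Z Z' hZ hZ' => rw [triCorr_add_right, triCorr_add_middle, hZ, hZ']
      | kronecker Z₁ Z₂ => rw [triCorr_kronecker, triCorr_kronecker, mul_comm, mul_assoc]

lemma triCorr_one_right (X Y : Matrix (D2 d) (D2 d) ℂ) :
    triCorr ρa ρb ρc X Y 1 = ((red₂ (ptrace₁ ρb) X ⊗ₖ red₁ (ptrace₂ ρa) Y) * ρc).trace := by
  induction X using kronecker_induction with
  | zero => simp [triCorr_zero_left, red₂, ptrace₁_zero]
  | add X X' hX hX' =>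
    simp only [triCorr_add_left, hX, hX', red₂, add_mul, ptrace₁_add, add_kronecker, trace_add]
  | kronecker X₁ X₂ =>
    induction Y using kronecker_induction with
    | zero => simp [triCorr_zero_middle, red₁, ptrace₂_zero]
    | add Y Y' hY hY' =>
      simp only [triCorr_add_middle, hY, hY', red₁, add_mul, ptrace₂_add, kronecker_add, trace_add]
    | kronecker Y₁ Y₂ =>
      rw [← one_kronecker_one, triCorr_kronecker, trace_one_kronecker_mul,
        trace_kronecker_one_mul, red₂_kronecker, red₁_kronecker, smul_kronecker, kronecker_smul,
        smul_mul_assoc, smul_mul_assoc, trace_smul, trace_smul, smul_eq_mul, smul_eq_mul,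
        mul_comm (trace ((_ ⊗ₖ _) * ρc))]

variable {ρa ρb ρc} (hρa : IsDensity ρa) (hρb : IsDensity ρb) (hρc : IsDensity ρc)

include hρa in
lemma triCorr_one_one (X : Matrix (D2 d) (D2 d) ℂ) :
    triCorr ρa ρb ρc X 1 1 = (X * (ptrace₁ ρb ⊗ₖ ptrace₂ ρc)).trace := by
  rw [triCorr_one_right, red₁_one hρa.ptrace₂.2, trace_kronecker_one_mul,
    trace_mul_kronecker_eq_red₂]

include hρa hρb in
lemma triCorr_sub_eq_obsCov (X Y : Matrix (D2 d) (D2 d) ℂ) :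
    triCorr ρa ρb ρc X Y 1 - triCorr ρa ρb ρc X 1 1 * triCorr ρa ρb ρc 1 Y 1 =
      obsCov ρc (red₂ (ptrace₁ ρb) X ⊗ₖ 1) (1 ⊗ₖ red₁ (ptrace₂ ρa) Y) := by
  simp only [triCorr_one_right, red₁_one hρa.ptrace₂.2, red₂_one hρb.ptrace₁.2, obsCov_apply,
    ← mul_kronecker_mul, one_mul, mul_one]

include hρa hρb hρc in
lemma two_mul_re_triCorr_sub_le {X Y : Matrix (D2 d) (D2 d) ℂ} (hX : X.IsHermitian)
    (hY : Y.IsHermitian) :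
    2 * (triCorr ρa ρb ρc X Y 1 - triCorr ρa ρb ρc X 1 1 * triCorr ρa ρb ρc 1 Y 1).re ≤
      obsVar (ptrace₂ ρc) (red₂ (ptrace₁ ρb) X) + obsVar (ptrace₁ ρc) (red₁ (ptrace₂ ρa) Y) := by
  rw [triCorr_sub_eq_obsCov hρa hρb]
  exact two_mul_re_obsCov_kronecker_one_le hρc (isHermitian_red₂ hρb.ptrace₁.1.1 hX)
    (isHermitian_red₁ hρa.ptrace₂.1.1 hY)

include hρa hρb hρc in
lemma obsVar_red_add_obsVar_red_le_triCorr_sub {κ m : Type*} [Fintype κ] [Fintype m]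
    {K : κ → Matrix m (D2 d) ℂ} (hK : ∑ l, (K l)ᴴ * K l = 1) {M : Matrix m m ℂ}
    (hM : M.IsHermitian) :
    obsVar (ptrace₂ ρc) (red₂ (ptrace₁ ρb) (krausDual K M)) +
        obsVar (ptrace₁ ρb) (red₁ (ptrace₂ ρc) (krausDual K M)) ≤
      (triCorr ρa ρb ρc (krausDual K (M * M)) 1 1 -
        triCorr ρa ρb ρc (krausDual K M) 1 1 * triCorr ρa ρb ρc (krausDual K M) 1 1).re := by
  have hω := hρb.ptrace₁.kronecker hρc.ptrace₂
  refine (obsVar_red₂_add_obsVar_red₁_le hρb.ptrace₁ hρc.ptrace₂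
    (isHermitian_krausDual K hM)).trans ?_
  have hKadisonSchwarz := (Complex.nonneg_iff.mp
    (trace_mul_nonneg (posSemidef_krausDual_mul_self_sub hK hM) hω.1)).1
  rw [sub_mul, trace_sub, Complex.sub_re] at hKadisonSchwarz
  simp only [triCorr_one_one hρa, obsVar, obsCov_apply, Complex.sub_re]
  linarith

end Triangle

section LocalChannels

variable {d nA nB nC LA LB LC : ℕ}

lemma outA_eq (M : Matrix (Fin nA) (Fin nA) ℂ) :
    (outA M : Matrix (Fin nA × Fin nB × Fin nC) _ ℂ) = M ⊗ₖ (1 ⊗ₖ 1) := by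
  rw [one_kronecker_one, outA]

lemma outB_eq (M : Matrix (Fin nB) (Fin nB) ℂ) :
    (outB M : Matrix (Fin nA × Fin nB × Fin nC) _ ℂ) = 1 ⊗ₖ (M ⊗ₖ 1) := by
  ext i j
  simp only [outB, of_apply, kroneckerMap_apply, one_apply]
  split_ifs <;> simp_all

lemma outC_eq (M : Matrix (Fin nC) (Fin nC) ℂ) :
    (outC M : Matrix (Fin nA × Fin nB × Fin nC) _ ℂ) = 1 ⊗ₖ (1 ⊗ₖ M) := rfl

lemma globalKraus_eq_submatrix (KA : Matrix (Fin nA) (D2 d) ℂ) (KB : Matrix (Fin nB) (D2 d) ℂ)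
    (KC : Matrix (Fin nC) (D2 d) ℂ) :
    globalKraus KA KB KC = (KA ⊗ₖ (KB ⊗ₖ KC)).submatrix id (partyEquiv d) := by
  ext i j
  simp only [globalKraus, partyEquiv, of_apply, submatrix_apply, kroneckerMap_apply,
    Equiv.coe_fn_mk, id_eq, mul_assoc]

variable (ρa ρb ρc : Matrix (D2 d) (D2 d) ℂ) (KA : Fin LA → Matrix (Fin nA) (D2 d) ℂ)
  (KB : Fin LB → Matrix (Fin nB) (D2 d) ℂ) (KC : Fin LC → Matrix (Fin nC) (D2 d) ℂ)

lemma triOp_krausDual (A : Matrix (Fin nA) (Fin nA) ℂ) (B : Matrix (Fin nB) (Fin nB) ℂ)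
    (C : Matrix (Fin nC) (Fin nC) ℂ) :
    triOp (krausDual KA A) (krausDual KB B) (krausDual KC C) =
      ∑ l, ∑ m, ∑ n, (globalKraus (KA l) (KB m) (KC n))ᴴ * (A ⊗ₖ (B ⊗ₖ C)) *
        globalKraus (KA l) (KB m) (KC n) := by
  have hlocal (l m n) : (globalKraus (KA l) (KB m) (KC n))ᴴ * (A ⊗ₖ (B ⊗ₖ C)) *
      globalKraus (KA l) (KB m) (KC n) =
        triOp ((KA l)ᴴ * A * KA l) ((KB m)ᴴ * B * KB m) ((KC n)ᴴ * C * KC n) := by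
    simp only [globalKraus_eq_submatrix, triOp, mul_kronecker_mul, conjTranspose_submatrix,
      conjTranspose_kronecker]
    rfl
  simp only [hlocal]
  ext i j
  simp only [triOp, krausDual, submatrix_apply, kroneckerMap_apply, Matrix.sum_apply,
    Finset.sum_mul_sum]
  simp only [Finset.mul_sum]

lemma trace_kronecker_mul_ctnState (A : Matrix (Fin nA) (Fin nA) ℂ)
    (B : Matrix (Fin nB) (Fin nB) ℂ) (C : Matrix (Fin nC) (Fin nC) ℂ) :
    ((A ⊗ₖ (B ⊗ₖ C)) * ctnState ρa ρb ρc KA KB KC).trace =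
      triCorr ρa ρb ρc (krausDual KA A) (krausDual KB B) (krausDual KC C) := by
  simp only [triCorr, triOp_krausDual, ctnState, Finset.mul_sum, Finset.sum_mul, trace_sum]
  refine Finset.sum_congr rfl fun l _ => Finset.sum_congr rfl fun m _ =>
    Finset.sum_congr rfl fun n _ => ?_
  rw [← Matrix.mul_assoc, trace_mul_comm, ← Matrix.mul_assoc, ← Matrix.mul_assoc]

variable {ρa ρb ρc KA KB KC} (hρa : IsDensity ρa) (hρb : IsDensity ρb) (hρc : IsDensity ρc)
  (hKA : ∑ l, (KA l)ᴴ * KA l = 1) (hKB : ∑ l, (KB l)ᴴ * KB l = 1)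
  (hKC : ∑ l, (KC l)ᴴ * KC l = 1)

include hρa hρb hρc hKA hKB hKC

lemma isDensity_ctnState : IsDensity (ctnState ρa ρb ρc KA KB KC) := by
  have hbtn : IsDensity (btnState ρa ρb ρc) := hρb.kronecker (hρc.kronecker hρa)
  refine ⟨posSemidef_sum _ fun l _ => posSemidef_sum _ fun m _ => posSemidef_sum _ fun n _ =>
    hbtn.1.mul_mul_conjTranspose_same _, ?_⟩
  have h := trace_kronecker_mul_ctnState ρa ρb ρc KA KB KC 1 1 1
  rwa [one_kronecker_one, one_kronecker_one, one_mul, krausDual_one hKA, krausDual_one hKB,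
    krausDual_one hKC, triCorr, triOp_one, one_mul, hbtn.2] at h

theorem two_mul_re_obsCov_ctnState_le {A : Matrix (Fin nA) (Fin nA) ℂ}
    {B : Matrix (Fin nB) (Fin nB) ℂ} {C : Matrix (Fin nC) (Fin nC) ℂ} (hA : A.IsHermitian)
    (hB : B.IsHermitian) (hC : C.IsHermitian) :
    let ρ := ctnState ρa ρb ρc KA KB KC
    2 * (obsCov ρ (outA A) (outB B) + obsCov ρ (outB B) (outC C) +
        obsCov ρ (outC C) (outA A)).re ≤
      obsVar ρ (outA A) + obsVar ρ (outB B) + obsVar ρ (outC C) := by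
  intro ρ
  have hAB := two_mul_re_triCorr_sub_le hρa hρb hρc (isHermitian_krausDual KA hA)
    (isHermitian_krausDual KB hB)
  have hBC := two_mul_re_triCorr_sub_le hρb hρc hρa (isHermitian_krausDual KB hB)
    (isHermitian_krausDual KC hC)
  have hCA := two_mul_re_triCorr_sub_le hρc hρa hρb (isHermitian_krausDual KC hC)
    (isHermitian_krausDual KA hA)
  have hAA := obsVar_red_add_obsVar_red_le_triCorr_sub hρa hρb hρc hKA hA
  have hBB := obsVar_red_add_obsVar_red_le_triCorr_sub hρb hρc hρa hKB hB
  have hCC := obsVar_red_add_obsVar_red_le_triCorr_sub hρc hρa hρb hKC hC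
  simp only [← triCorr_cycle ρa ρb ρc, triCorr_cycle ρc ρa ρb] at hAB hBC hCA hAA hBB hCC
  simp only [ρ, obsVar, obsCov_apply, outA_eq, outB_eq, outC_eq, ← mul_kronecker_mul, one_mul,
    mul_one, trace_kronecker_mul_ctnState, krausDual_one hKA, krausDual_one hKB,
    krausDual_one hKC, Complex.add_re] at *
  linarith

end LocalChannels

section GHZ

lemma re_apply_sq_le_of_posSemidef {n : Type*} {R : Matrix n n ℂ} (hR : R.PosSemidef) (i j : n) :
    (R i j).re ^ 2 ≤ (R i i).re * (R j j).re := by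
  have hminor := (Complex.nonneg_iff.mp (hR.submatrix ![i, j]).det_nonneg).1
  have hii : (R i i).im = 0 := Complex.conj_eq_iff_im.mp (hR.1.apply i i)
  have hji : R j i = star (R i j) := (hR.1.apply j i).symm
  simp only [det_fin_two, submatrix_apply, cons_val_zero, cons_val_one, hji, Complex.sub_re,
    Complex.mul_re, hii, Complex.star_def, Complex.conj_re, Complex.conj_im] at hminor
  nlinarith [sq_nonneg (R i j).im]

lemma trace_diagonal_mul_of_isHermitian {n : Type*} [Fintype n] [DecidableEq n] {R : Matrix n n ℂ}
    (hR : R.IsHermitian) (v : n → ℝ) :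
    (diagonal (fun i => (v i : ℂ)) * R).trace = ((∑ i, v i * (R i i).re : ℝ) : ℂ) := by
  have hreal (i : n) : ((R i i).re : ℂ) = R i i := Complex.conj_eq_iff_re.mp (hR.apply i i)
  simp only [Matrix.trace, diag_apply, diagonal_mul, Complex.ofReal_sum, Complex.ofReal_mul, hreal]

lemma re_obsCov_diagonal {n : Type*} [Fintype n] [DecidableEq n] {R : Matrix n n ℂ}
    (hR : R.IsHermitian) (v w : n → ℝ) :
    (obsCov R (diagonal fun i => (v i : ℂ)) (diagonal fun i => (w i : ℂ))).re =
      ∑ i, v i * w i * (R i i).re - (∑ i, v i * (R i i).re) * ∑ i, w i * (R i i).re := by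
  rw [obsCov_apply, diagonal_mul_diagonal]
  simp only [← Complex.ofReal_mul, trace_diagonal_mul_of_isHermitian hR, ← Complex.ofReal_sub,
    Complex.ofReal_re]

lemma ghz_fidelity_eq {R : Matrix (Fin 2 × Fin 2 × Fin 2) _ ℂ} (hR : R.IsHermitian) :
    (star ghzVec ⬝ᵥ R *ᵥ ghzVec).re =
      ((R (0, 0, 0) (0, 0, 0)).re + (R (1, 1, 1) (1, 1, 1)).re) / 2 +
        (R (0, 0, 0) (1, 1, 1)).re := by
  have hconj : (R (1, 1, 1) (0, 0, 0)).re = (R (0, 0, 0) (1, 1, 1)).re := by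
    rw [← hR.apply, Complex.star_def, Complex.conj_re]
  have hsqrt : (Real.sqrt 2)⁻¹ * (Real.sqrt 2)⁻¹ = 1 / 2 := by
    rw [← mul_inv, Real.mul_self_sqrt zero_le_two, one_div]
  simp [dotProduct, mulVec, ghzVec, Fintype.sum_prod_type, Fin.sum_univ_two, hconj,
    -Complex.ofReal_inv, -one_div]
  linear_combination ((R (0, 0, 0) (0, 0, 0)).re + (R (1, 1, 1) (1, 1, 1)).re +
    2 * (R (0, 0, 0) (1, 1, 1)).re) * hsqrt

/-- The eigenvalues `±1` of the Pauli observable `Z`. -/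
def spin : Fin 2 → ℝ := ![1, -1]

/-- The Pauli observable `Z`, measured by each party to bound the GHZ fidelity. -/
def pauliZ : Matrix (Fin 2) (Fin 2) ℂ := diagonal fun i => (spin i : ℂ)

lemma isHermitian_pauliZ : pauliZ.IsHermitian :=
  isHermitian_diagonal_of_self_adjoint _ (by ext; simp)

/-- The total polarization `⟨Z_A + Z_B + Z_C⟩` of a three-qubit state. -/
def polarization (R : Matrix (Fin 2 × Fin 2 × Fin 2) (Fin 2 × Fin 2 × Fin 2) ℂ) : ℝ :=
  ∑ i, (spin i.1 + spin i.2.1 + spin i.2.2) * (R i i).re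

variable {R : Matrix (Fin 2 × Fin 2 × Fin 2) (Fin 2 × Fin 2 × Fin 2) ℂ}

lemma outA_pauliZ : outA pauliZ = diagonal fun i : Fin 2 × Fin 2 × Fin 2 => (spin i.1 : ℂ) := by
  simp only [outA_eq, pauliZ, ← diagonal_one, diagonal_kronecker_diagonal, mul_one]

lemma outB_pauliZ : outB pauliZ = diagonal fun i : Fin 2 × Fin 2 × Fin 2 => (spin i.2.1 : ℂ) := by
  simp only [outB_eq, pauliZ, ← diagonal_one, diagonal_kronecker_diagonal, mul_one, one_mul]

lemma outC_pauliZ : outC pauliZ = diagonal fun i : Fin 2 × Fin 2 × Fin 2 => (spin i.2.2 : ℂ) := by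
  simp only [outC_eq, pauliZ, ← diagonal_one, diagonal_kronecker_diagonal, one_mul]

lemma sum_re_diag (hR : IsDensity R) : ∑ i, (R i i).re = 1 := by
  rw [← Complex.re_sum]; exact congrArg Complex.re hR.2

lemma ghz_population_le (hR : IsDensity R)
    (hcov : 2 * (obsCov R (outA pauliZ) (outB pauliZ) + obsCov R (outB pauliZ) (outC pauliZ) +
        obsCov R (outC pauliZ) (outA pauliZ)).re ≤
      obsVar R (outA pauliZ) + obsVar R (outB pauliZ) + obsVar R (outC pauliZ)) :
    (R (0, 0, 0) (0, 0, 0)).re + (R (1, 1, 1) (1, 1, 1)).re ≤ 5 / 8 + polarization R ^ 2 / 24 := by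
  have hsum := sum_re_diag hR
  set a := ∑ i, spin i.1 * (R i i).re with ha
  set b := ∑ i, spin i.2.1 * (R i i).re with hb
  set c := ∑ i, spin i.2.2 * (R i i).re with hc
  have hs : polarization R = a + b + c := by
    simp only [polarization, a, b, c, add_mul, Finset.sum_add_distrib]
  have hpairs : 2 * (4 * ((R (0, 0, 0) (0, 0, 0)).re + (R (1, 1, 1) (1, 1, 1)).re) - 1 -
      (a * b + b * c + c * a)) ≤ 3 - (a ^ 2 + b ^ 2 + c ^ 2) := by
    simp only [obsVar, Complex.add_re, outA_pauliZ, outB_pauliZ, outC_pauliZ,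
      re_obsCov_diagonal hR.1.1, ← ha, ← hb, ← hc] at hcov
    simp [Fintype.sum_prod_type, Fin.sum_univ_two, spin] at hcov hsum
    linarith
  rw [hs]
  nlinarith [sq_nonneg (a - b), sq_nonneg (b - c), sq_nonneg (c - a)]

lemma abs_polarization_sub_le (hR : IsDensity R) :
    |polarization R - 3 * ((R (0, 0, 0) (0, 0, 0)).re - (R (1, 1, 1) (1, 1, 1)).re)| ≤
      1 - ((R (0, 0, 0) (0, 0, 0)).re + (R (1, 1, 1) (1, 1, 1)).re) := by
  have hsum := sum_re_diag hR
  have hpos (i) : 0 ≤ (R i i).re := (Complex.nonneg_iff.mp hR.1.diag_nonneg).1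
  rw [abs_le]
  simp [polarization, Fintype.sum_prod_type, Fin.sum_univ_two, spin] at hsum ⊢
  constructor <;> linarith [hpos (0, 0, 1), hpos (0, 1, 0), hpos (1, 0, 0), hpos (0, 1, 1),
    hpos (1, 0, 1), hpos (1, 1, 0)]

lemma half_population_add_coherence_le {p q c s : ℝ} (hc : c ^ 2 ≤ p * q)
    (hpop : p + q ≤ 5 / 8 + s ^ 2 / 24) (hpol : |s - 3 * (p - q)| ≤ 1 - (p + q)) :
    (p + q) / 2 + c ≤ 2 / 3 := by
  by_contra! hlarge
  obtain ⟨hpol_lower, hpol_upper⟩ := abs_le.mp hpol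
  have hle_one : p + q ≤ 1 := by linarith
  have hdiff : (p - q) ^ 2 < 8 / 3 * (p + q) - 16 / 9 := by
    have hcoherence : (2 / 3 - (p + q) / 2) ^ 2 < c ^ 2 :=
      pow_lt_pow_left₀ (by linarith) (by linarith) two_ne_zero
    linarith
  -- Young's inequality; its weights make the quadratic below vanish at `p + q = 1` and `2 / 3`.
  have hs : s ^ 2 ≤ 9 / 8 * (3 * (p - q)) ^ 2 + 9 * (1 - (p + q)) ^ 2 := by
    have hr : (s - 3 * (p - q)) ^ 2 ≤ (1 - (p + q)) ^ 2 := sq_le_sq' hpol_lower hpol_upper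
    linarith [sq_nonneg (3 * (p - q) - 8 * (s - 3 * (p - q)))]
  have hquadratic : 0 < (p + q - 1) * (3 * (p + q) - 2) := by linarith
  have htwo_thirds_le : 0 ≤ 3 * (p + q) - 2 := by linarith [sq_nonneg (p - q)]
  exact hquadratic.not_ge (mul_nonpos_of_nonpos_of_nonneg (sub_nonpos.mpr hle_one) htwo_thirds_le)

end GHZ

theorem stmt14_general {d LA LB LC : ℕ}
    (ρa ρb ρc : Matrix (D2 d) (D2 d) ℂ)
    (hρa : IsDensity ρa) (hρb : IsDensity ρb) (hρc : IsDensity ρc)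
    (KA : Fin LA → Matrix (Fin 2) (D2 d) ℂ)
    (KB : Fin LB → Matrix (Fin 2) (D2 d) ℂ)
    (KC : Fin LC → Matrix (Fin 2) (D2 d) ℂ)
    (hKA : ∑ l, (KA l)ᴴ * KA l = 1)
    (hKB : ∑ l, (KB l)ᴴ * KB l = 1)
    (hKC : ∑ l, (KC l)ᴴ * KC l = 1) :
    (star ghzVec ⬝ᵥ (ctnState ρa ρb ρc KA KB KC) *ᵥ ghzVec).re ≤
      2 / 3 := by
  have hρ := isDensity_ctnState hρa hρb hρc hKA hKB hKC
  rw [ghz_fidelity_eq hρ.1.1]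
  have hcov := two_mul_re_obsCov_ctnState_le hρa hρb hρc hKA hKB hKC isHermitian_pauliZ
    isHermitian_pauliZ isHermitian_pauliZ
  exact half_population_add_coherence_le (re_apply_sq_le_of_posSemidef hρ.1 _ _)
    (ghz_population_le hρ hcov) (abs_polarization_sub_le hρ)

/-- Every three-qubit triangle network state with local
channels has fidelity at most `3 − √5` to the GHZ state. -/
theorem stmt14 {d LA LB LC : ℕ} (hd : 1 ≤ d)
    (ρa ρb ρc : Matrix (D2 d) (D2 d) ℂ)
    (hρa : IsDensity ρa) (hρb : IsDensity ρb) (hρc : IsDensity ρc)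
    (KA : Fin LA → Matrix (Fin 2) (D2 d) ℂ)
    (KB : Fin LB → Matrix (Fin 2) (D2 d) ℂ)
    (KC : Fin LC → Matrix (Fin 2) (D2 d) ℂ)
    (hKA : ∑ l, (KA l)ᴴ * KA l = 1)
    (hKB : ∑ l, (KB l)ᴴ * KB l = 1)
    (hKC : ∑ l, (KC l)ᴴ * KC l = 1) :
    (star ghzVec ⬝ᵥ (ctnState ρa ρb ρc KA KB KC) *ᵥ ghzVec).re ≤
      3 - Real.sqrt 5 := by
  have hsqrt : Real.sqrt 5 ≤ 7 / 3 := Real.sqrt_le_iff.mpr ⟨by norm_num, by norm_num⟩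
  linarith [stmt14_general ρa ρb ρc hρa hρb hρc KA KB KC hKA hKB hKC]
end
end

section
/- Let ρ = ⊗_{s∈S} ρ_s be a basic no-common-double-source (BNCDS) network state on N nodes, and for each node x let {A_{x|i}} be a finite family of observables for node x. Let Γ be the covariance matrix of the combined family {A_{x|i} : x = 1,…,N} on ρ, with N×N block structure, off-diagonal blocks γ_{xy}. Then γ_{xy} = 0 whenever nodes x and y share no source, and there exist Hermitian matrices Υ_x^s (for s ∈ S and x ∈ N(s)) such that Γ = Σ_{s∈S} T_s, where T_s is the block matrix whose diagonal x-block is Υ_x^s if x ∈ N(s) and 0 otherwise, whose off-diagonal (x,y)-block is γ_{xy} if {x,y} ⊆ N(s) and 0 otherwise, and each T_s is positive semidefinite. -/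
open Matrix BigOperators
open scoped ComplexOrder

noncomputable section

section network

variable {N nS d : ℕ} (Ns : Fin nS → Finset (Fin N))

/-- Index of the global Hilbert space `⊗_{s} ⊗_{x ∈ N(s)} C^d` of the network. -/
abbrev GIdx (Ns : Fin nS → Finset (Fin N)) (d : ℕ) := ∀ s : Fin nS, (↥(Ns s) → Fin d)

/-- Index of node `x`'s subsystem: the factors `(s, x)` with `x ∈ N(s)`. -/
abbrev NIdx (Ns : Fin nS → Finset (Fin N)) (d : ℕ) (x : Fin N) :=
  ∀ _ : {s : Fin nS // x ∈ Ns s}, Fin d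

/-- The global network state `⊗_{s ∈ S} ρ_s`. -/
def networkState (ρs : ∀ s : Fin nS, Matrix (↥(Ns s) → Fin d) (↥(Ns s) → Fin d) ℂ) :
    Matrix (GIdx Ns d) (GIdx Ns d) ℂ :=
  Matrix.of fun i j => ∏ s, ρs s (i s) (j s)

/-- Embed an observable acting on node `x`'s subsystem into the global space
(tensored with the identity on all other factors). -/
def embedNode (x : Fin N) (M : Matrix (NIdx Ns d x) (NIdx Ns d x) ℂ) :
    Matrix (GIdx Ns d) (GIdx Ns d) ℂ :=
  Matrix.of fun i j =>
    if ∀ (s : Fin nS) (y : ↥(Ns s)), (y : Fin N) ≠ x → i s y = j s y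
    then M (fun s => i s.1 ⟨x, s.2⟩) (fun s => j s.1 ⟨x, s.2⟩) else 0

end network

/-!
Replacing an observable `X` by its conditional expectation `E_s X = tr_s (X ρ_s) ⊗ 1` given all
sources but `s` obeys a law of total covariance, `Cov X = Cov (E_s X) + Cov (X - E_s X)`. Averaging
out the sources one after another ends with scalars, whose covariance vanishes, so `Cov X` is the
sum over `s` of the covariance matrices of the successive differences. Each of these is positive
semidefinite, and its rows and columns at observables acting trivially on `s` are zero. When two
nodes share at most one source, at most one summand contributes to their off-diagonal block.
-/

open Function
open scoped Kronecker MatrixOrder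

section Covariance

variable {n ι : Type*} [Fintype n]

lemma posSemidef_trace_mul_mul_conjTranspose {𝕜 : Type*} [RCLike 𝕜] {ρ : Matrix n n 𝕜}
    (hρ : ρ.PosSemidef) (W : ι → Matrix n n 𝕜) :
    (of fun i j => (W j * ρ * (W i)ᴴ).trace).PosSemidef := by
  refine ⟨?_, fun c => ?_⟩
  · ext i j
    simp only [conjTranspose_apply, of_apply, ← trace_conjTranspose, conjTranspose_mul,
      conjTranspose_conjTranspose, hρ.isHermitian.eq, mul_assoc]
  · let V := c.sum fun i ci => ci • W i
    have hV : (V * ρ * Vᴴ).trace =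
        c.sum fun i ci => c.sum fun j cj => star ci * (W j * ρ * (W i)ᴴ).trace * cj := by
      simp only [V, Finsupp.sum, conjTranspose_sum, conjTranspose_smul, Finset.mul_sum,
        Finset.sum_mul, smul_mul_assoc, mul_smul_comm, trace_sum, trace_smul, smul_eq_mul]
      refine Finset.sum_congr rfl fun i _ => Finset.sum_congr rfl fun j _ => ?_
      ring
    exact hV ▸ (hρ.mul_mul_conjTranspose_same V).trace_nonneg

lemma star_trace_mul_of_isHermitian {R : Type*} [CommSemiring R] [StarRing R] {A B : Matrix n n R}
    (hA : A.IsHermitian) (hB : B.IsHermitian) : star (A * B).trace = (A * B).trace := by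
  rw [← trace_conjTranspose, conjTranspose_mul, hA.eq, hB.eq, trace_mul_comm]

lemma covMat_eq_trace_centered [DecidableEq n] {ρ : Matrix n n ℂ} (hρ : ρ.trace = 1)
    (M : ι → Matrix n n ℂ) (i j : ι) :
    covMat M ρ i j =
      ((M i - (M i * ρ).trace • 1) * (M j - (M j * ρ).trace • 1) * ρ).trace := by
  simp only [covMat, of_apply, sub_mul, mul_sub, smul_mul_assoc, mul_smul_comm, one_mul, mul_one,
    trace_sub, trace_smul, smul_eq_mul, hρ]
  ring

lemma posSemidef_covMat {ρ : Matrix n n ℂ} (hρ : IsDensity ρ) {M : ι → Matrix n n ℂ}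
    (hM : ∀ i, (M i).IsHermitian) : (covMat M ρ).PosSemidef := by
  classical
  let W i := M i - (M i * ρ).trace • (1 : Matrix n n ℂ)
  have hW i : (W i)ᴴ = W i := by
    simp only [W, conjTranspose_sub, conjTranspose_smul, conjTranspose_one, (hM i).eq,
      star_trace_mul_of_isHermitian (hM i) hρ.1.isHermitian]
  have hcov : covMat M ρ = of fun i j => (W j * ρ * (W i)ᴴ).trace := by
    ext i j
    rw [covMat_eq_trace_centered hρ.2, of_apply, hW, trace_mul_cycle, trace_mul_cycle]
  exact hcov ▸ posSemidef_trace_mul_mul_conjTranspose hρ.1 W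

lemma covMat_smul_one [DecidableEq n] {ρ : Matrix n n ℂ} (hρ : ρ.trace = 1) (c : ι → ℂ) :
    covMat (fun i => c i • (1 : Matrix n n ℂ)) ρ = 0 := by
  ext i j
  simp only [covMat, of_apply, smul_mul_assoc, one_mul, mul_smul_comm, trace_smul, smul_eq_mul, hρ,
    mul_one, Matrix.zero_apply]
  ring

lemma covMat_apply_of_eq_zero {M : ι → Matrix n n ℂ} {i j : ι} (h : M i = 0 ∨ M j = 0)
    (ρ : Matrix n n ℂ) : covMat M ρ i j = 0 := by
  rcases h with h | h <;> simp [covMat, h]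

end Covariance

section PartialExpectation

variable {a b R : Type*} [Fintype a] [CommSemiring R]

/-- The partial expectation `tr_a (X (σ ⊗ 1))` of an operator `X` on a bipartite system, in the
state `σ` of the first factor. It is the building block of `condExpAt`. -/
def partialExpectation (σ : Matrix a a R) (X : Matrix (a × b) (a × b) R) : Matrix b b R :=
  of fun r q => ∑ i, ∑ j, X (i, r) (j, q) * σ j i

lemma partialExpectation_one_kronecker [DecidableEq a] (σ : Matrix a a R) (B : Matrix b b R) :
    partialExpectation σ (1 ⊗ₖ B) = σ.trace • B := by
  ext r q
  simp only [partialExpectation, of_apply, kroneckerMap_apply, one_apply, ite_mul, one_mul,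
    zero_mul, Finset.sum_ite_eq, Finset.mem_univ, if_true, ← Finset.mul_sum]
  exact mul_comm _ _

lemma partialExpectation_one_kronecker_mul [DecidableEq a] [Fintype b] (σ : Matrix a a R)
    (B : Matrix b b R) (X : Matrix (a × b) (a × b) R) :
    partialExpectation σ ((1 ⊗ₖ B) * X) = B * partialExpectation σ X := by
  ext r q
  simp only [partialExpectation, of_apply, mul_apply, kroneckerMap_apply, one_apply, ite_mul,
    one_mul, zero_mul, Fintype.sum_prod_type_right, Finset.sum_ite_eq, Finset.mem_univ, if_true,
    Finset.sum_mul, Finset.mul_sum, mul_assoc, Finset.sum_comm (γ := b)]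

lemma partialExpectation_mul_one_kronecker [DecidableEq a] [Fintype b] (σ : Matrix a a R)
    (X : Matrix (a × b) (a × b) R) (B : Matrix b b R) :
    partialExpectation σ (X * (1 ⊗ₖ B)) = partialExpectation σ X * B := by
  ext r q
  simp only [partialExpectation, of_apply, mul_apply, kroneckerMap_apply, one_apply, ite_mul,
    one_mul, zero_mul, mul_ite, mul_zero, Fintype.sum_prod_type_right, Finset.sum_ite_eq',
    Finset.mem_univ, if_true, Finset.sum_mul, Finset.sum_comm (γ := b), mul_right_comm]

lemma trace_mul_kronecker [Fintype b] (X : Matrix (a × b) (a × b) R) (σ : Matrix a a R)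
    (τ : Matrix b b R) : (X * (σ ⊗ₖ τ)).trace = (partialExpectation σ X * τ).trace := by
  simp only [partialExpectation, trace, diag, mul_apply, of_apply, kroneckerMap_apply,
    Fintype.sum_prod_type, Finset.sum_mul, mul_assoc, Finset.sum_comm (γ := a) (α := b)]

lemma isHermitian_partialExpectation [StarRing R] {σ : Matrix a a R}
    {X : Matrix (a × b) (a × b) R} (hσ : σ.IsHermitian) (hX : X.IsHermitian) :
    (partialExpectation σ X).IsHermitian := by
  ext r q
  simp only [partialExpectation, conjTranspose_apply, of_apply, star_sum, star_mul', hX.apply,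
    hσ.apply]
  exact Finset.sum_comm

end PartialExpectation

section PiKronecker

variable {S R : Type*} {α : S → Type*} [Fintype S]

/-- The Kronecker product of a finite family of matrices. Its instances include `networkState`. -/
def piKronecker [CommMonoid R] (A : ∀ s, Matrix (α s) (α s) R) :
    Matrix (∀ s, α s) (∀ s, α s) R :=
  of fun i j => ∏ s, A s (i s) (j s)

lemma piKronecker_submatrix_piSplitAt [DecidableEq S] [CommSemiring R]
    (A : ∀ s, Matrix (α s) (α s) R) (s : S) :
    (piKronecker A).submatrix (Equiv.piSplitAt s α).symm (Equiv.piSplitAt s α).symm =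
      A s ⊗ₖ piKronecker fun t : {t // t ≠ s} => A t := by
  ext ⟨a, r⟩ ⟨b, q⟩
  simp only [piKronecker, submatrix_apply, of_apply, kroneckerMap_apply,
    Fintype.prod_eq_mul_prod_subtype_ne _ s, Equiv.piSplitAt_symm_apply, dite_true]
  congr 1
  refine Finset.prod_congr rfl fun t _ => ?_
  simp only [dif_neg t.2]

lemma trace_mul_piKronecker [DecidableEq S] [∀ s, Fintype (α s)] [CommSemiring R]
    (A : ∀ s, Matrix (α s) (α s) R) (s : S) (X : Matrix (∀ s, α s) (∀ s, α s) R) :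
    let e := (Equiv.piSplitAt s α).symm
    (X * piKronecker A).trace =
      (X.submatrix e e * (A s ⊗ₖ piKronecker fun t : {t // t ≠ s} => A t)).trace := by
  intro e
  rw [← piKronecker_submatrix_piSplitAt, submatrix_mul_equiv]
  exact (e.sum_comp fun i => (X * piKronecker A) i i).symm

lemma conjTranspose_piKronecker [CommSemiring R] [StarRing R] (A : ∀ s, Matrix (α s) (α s) R) :
    (piKronecker A)ᴴ = piKronecker fun s => (A s)ᴴ := by
  ext i j
  simp only [piKronecker, conjTranspose_apply, of_apply, star_prod]

lemma piKronecker_mul [DecidableEq S] [∀ s, Fintype (α s)] [CommSemiring R]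
    (A B : ∀ s, Matrix (α s) (α s) R) :
    piKronecker A * piKronecker B = piKronecker fun s => A s * B s := by
  ext i j
  simp only [piKronecker, mul_apply, of_apply, ← Finset.prod_mul_distrib, Fintype.prod_sum]

lemma trace_piKronecker [DecidableEq S] [∀ s, Fintype (α s)] [CommSemiring R]
    (A : ∀ s, Matrix (α s) (α s) R) : (piKronecker A).trace = ∏ s, (A s).trace := by
  simp only [piKronecker, trace, diag, of_apply, Fintype.prod_sum]

lemma posSemidef_piKronecker [∀ s, Finite (α s)] {𝕜 : Type*} [RCLike 𝕜]
    {A : ∀ s, Matrix (α s) (α s) 𝕜} (hA : ∀ s, (A s).PosSemidef) :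
    (piKronecker A).PosSemidef := by
  classical
  have (s : S) : Fintype (α s) := Fintype.ofFinite _
  choose C hC using fun s => CStarAlgebra.nonneg_iff_eq_star_mul_self.1 (hA s).nonneg
  have h : piKronecker A = (piKronecker C)ᴴ * piKronecker C := by
    rw [conjTranspose_piKronecker, piKronecker_mul]
    exact congrArg piKronecker (funext hC)
  exact h ▸ posSemidef_conjTranspose_mul_self _

lemma isDensity_piKronecker [DecidableEq S] [∀ s, Fintype (α s)]
    {ρ : ∀ s, Matrix (α s) (α s) ℂ} (hρ : ∀ s, IsDensity (ρ s)) : IsDensity (piKronecker ρ) :=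
  ⟨posSemidef_piKronecker fun s => (hρ s).1, by
    simp only [trace_piKronecker, (hρ _).2, Finset.prod_const_one]⟩

end PiKronecker

section ConditionalExpectation

variable {S R : Type*} {α : S → Type*} [DecidableEq S]

/-- An operator on `⊗_s H_s` acts trivially at `s` if it is the tensor product of the identity on
`H_s` and an operator on the other factors; here this is said in terms of matrix entries. -/
structure ActsTriviallyAt [Zero R] (s : S) (X : Matrix (∀ s, α s) (∀ s, α s) R) : Prop where
  apply_eq_zero : ∀ i j, i s ≠ j s → X i j = 0
  apply_update_update : ∀ i j a, i s = j s → X (update i s a) (update j s a) = X i j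

lemma ActsTriviallyAt.apply_self_eq [Finite S] [Zero R] {X : Matrix (∀ s, α s) (∀ s, α s) R}
    (hX : ∀ s, ActsTriviallyAt s X) (i j : ∀ s, α s) : X i i = X j j := by
  cases nonempty_fintype S
  have hpiecewise (F : Finset S) : X (F.piecewise i j) (F.piecewise i j) = X j j := by
    induction F using Finset.induction_on with
    | empty => simp only [Finset.piecewise_empty]
    | insert s F _ ih => rw [Finset.piecewise_insert, (hX s).apply_update_update _ _ _ rfl, ih]
  simpa only [Finset.piecewise_univ] using hpiecewise Finset.univ

lemma exists_eq_smul_one_of_actsTriviallyAt [Finite S] [DecidableEq (∀ s, α s)] [Semiring R]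
    {X : Matrix (∀ s, α s) (∀ s, α s) R} (hX : ∀ s, ActsTriviallyAt s X) :
    ∃ c : R, X = c • 1 := by
  rcases isEmpty_or_nonempty (∀ s, α s) with _ | ⟨⟨k⟩⟩
  · exact ⟨0, Matrix.ext fun i => isEmptyElim i⟩
  · refine ⟨X k k, Matrix.ext fun i j => ?_⟩
    rcases eq_or_ne i j with rfl | hij
    · simp [ActsTriviallyAt.apply_self_eq hX i k]
    · obtain ⟨s, hs⟩ := Function.ne_iff.1 hij
      simp [hij, (hX s).apply_eq_zero i j hs]

lemma piSplitAt_symm_eq_update (s : S) (i : ∀ s, α s) (a : α s) :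
    (Equiv.piSplitAt s α).symm (a, (Equiv.piSplitAt s α i).2) = update i s a := by
  ext t
  rcases eq_or_ne t s with rfl | ht
  · simp
  · simp [ht]

variable [∀ s, Fintype (α s)] [∀ s, DecidableEq (α s)]

/-- The conditional expectation `1 ⊗ tr_s (X (σ ⊗ 1))` of an operator `X` on `⊗_s H_s`, which
averages out the factor `s` in the state `σ`. -/
def condExpAt [CommSemiring R] (s : S) (σ : Matrix (α s) (α s) R)
    (X : Matrix (∀ s, α s) (∀ s, α s) R) : Matrix (∀ s, α s) (∀ s, α s) R :=
  let e := Equiv.piSplitAt s α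
  (1 ⊗ₖ partialExpectation σ (X.submatrix e.symm e.symm)).submatrix e e

lemma condExpAt_apply [CommSemiring R] (s : S) (σ : Matrix (α s) (α s) R)
    (X : Matrix (∀ s, α s) (∀ s, α s) R) (i j : ∀ s, α s) :
    condExpAt s σ X i j =
      if i s = j s then ∑ a, ∑ b, X (update i s a) (update j s b) * σ b a else 0 := by
  simp only [condExpAt, partialExpectation, submatrix_apply, kroneckerMap_apply, of_apply,
    piSplitAt_symm_eq_update, one_apply, ite_mul, one_mul, zero_mul]
  rfl

lemma actsTriviallyAt_condExpAt [CommSemiring R] (s : S) (σ : Matrix (α s) (α s) R)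
    (X : Matrix (∀ s, α s) (∀ s, α s) R) : ActsTriviallyAt s (condExpAt s σ X) where
  apply_eq_zero i j h := by simp only [condExpAt_apply, if_neg h]
  apply_update_update i j a h := by
    simp only [condExpAt_apply, update_self, update_idem, if_true, if_pos h]

lemma ActsTriviallyAt.condExpAt [CommSemiring R] {s : S} {X : Matrix (∀ s, α s) (∀ s, α s) R}
    (hX : ActsTriviallyAt s X) (t : S) (σ : Matrix (α t) (α t) R) :
    ActsTriviallyAt s (condExpAt t σ X) := by
  rcases eq_or_ne s t with rfl | hst
  · exact actsTriviallyAt_condExpAt s σ X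
  have hupdate (i : ∀ s, α s) (a : α t) : update i t a s = i s := update_of_ne hst _ _
  refine ⟨fun i j h => ?_, fun i j a h => ?_⟩
  · have hzero a b : X (update i t a) (update j t b) = 0 :=
      hX.apply_eq_zero _ _ (by rwa [hupdate, hupdate])
    simp only [condExpAt_apply, hzero, zero_mul, Finset.sum_const_zero, ite_self]
  · have heq b c : X (update (update i s a) t b) (update (update j s a) t c) =
        X (update i t b) (update j t c) := by
      rw [update_comm hst, update_comm hst,
        hX.apply_update_update _ _ _ (by rwa [hupdate, hupdate])]
    simp only [condExpAt_apply, heq, update_of_ne hst.symm]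

lemma ActsTriviallyAt.condExpAt_eq_self [CommSemiring R] {s : S}
    {X : Matrix (∀ s, α s) (∀ s, α s) R} (hX : ActsTriviallyAt s X) {σ : Matrix (α s) (α s) R}
    (hσ : σ.trace = 1) : _root_.condExpAt s σ X = X := by
  ext i j
  rw [condExpAt_apply]
  split_ifs with h
  · have hblock a b : X (update i s a) (update j s b) = if a = b then X i j else 0 := by
      split_ifs with hab
      · rw [hab, hX.apply_update_update _ _ _ h]
      · exact hX.apply_eq_zero _ _ (by rwa [update_self, update_self])
    have hsum : ∑ a, σ a a = 1 := hσ
    simp only [hblock, ite_mul, zero_mul, Finset.sum_ite_eq, Finset.mem_univ, if_true,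
      ← Finset.mul_sum, hsum, mul_one]
  · exact (hX.apply_eq_zero i j h).symm

lemma isHermitian_condExpAt [CommSemiring R] [StarRing R] {s : S} {σ : Matrix (α s) (α s) R}
    {X : Matrix (∀ s, α s) (∀ s, α s) R} (hσ : σ.IsHermitian) (hX : X.IsHermitian) :
    (condExpAt s σ X).IsHermitian := by
  refine IsHermitian.submatrix ?_ _
  rw [IsHermitian, conjTranspose_kronecker, conjTranspose_one,
    (isHermitian_partialExpectation hσ (hX.submatrix _)).eq]

lemma submatrix_condExpAt [CommSemiring R] (s : S) (σ : Matrix (α s) (α s) R)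
    (X : Matrix (∀ s, α s) (∀ s, α s) R) :
    let e := (Equiv.piSplitAt s α).symm
    (condExpAt s σ X).submatrix e e = 1 ⊗ₖ partialExpectation σ (X.submatrix e e) := by
  intro e
  simp only [condExpAt, submatrix_submatrix, e, Equiv.self_comp_symm, submatrix_id_id]

variable [Fintype S] [CommSemiring R] {ρ : ∀ s, Matrix (α s) (α s) R} {s : S}

lemma trace_condExpAt_mul_mul (hρ : (ρ s).trace = 1) (X Y : Matrix (∀ s, α s) (∀ s, α s) R) :
    (condExpAt s (ρ s) X * Y * piKronecker ρ).trace =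
      (condExpAt s (ρ s) X * condExpAt s (ρ s) Y * piKronecker ρ).trace := by
  simp only [trace_mul_piKronecker ρ s, ← submatrix_mul_equiv _ _ _ (Equiv.piSplitAt s α).symm,
    submatrix_condExpAt, trace_mul_kronecker, partialExpectation_one_kronecker_mul,
    partialExpectation_one_kronecker, hρ, one_smul]

lemma trace_mul_condExpAt_mul (hρ : (ρ s).trace = 1) (X Y : Matrix (∀ s, α s) (∀ s, α s) R) :
    (X * condExpAt s (ρ s) Y * piKronecker ρ).trace =
      (condExpAt s (ρ s) X * condExpAt s (ρ s) Y * piKronecker ρ).trace := by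
  simp only [trace_mul_piKronecker ρ s, ← submatrix_mul_equiv _ _ _ (Equiv.piSplitAt s α).symm,
    submatrix_condExpAt, trace_mul_kronecker, partialExpectation_mul_one_kronecker,
    partialExpectation_one_kronecker, hρ, one_smul]

lemma trace_condExpAt_mul (hρ : (ρ s).trace = 1) (X : Matrix (∀ s, α s) (∀ s, α s) R) :
    (condExpAt s (ρ s) X * piKronecker ρ).trace = (X * piKronecker ρ).trace := by
  simp only [trace_mul_piKronecker ρ s, submatrix_condExpAt, trace_mul_kronecker,
    partialExpectation_one_kronecker, hρ, one_smul]

end ConditionalExpectation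

section CovarianceDecomposition

variable {S ι : Type*} {α : S → Type*} [Fintype S] [DecidableEq S] [∀ s, Fintype (α s)]
  {ρ : ∀ s, Matrix (α s) (α s) ℂ}

lemma covMat_eq_covMat_condExpAt_add [∀ s, DecidableEq (α s)] (s : S) (hρ : (ρ s).trace = 1)
    (X : ι → Matrix (∀ s, α s) (∀ s, α s) ℂ) :
    covMat X (piKronecker ρ) = covMat (fun i => condExpAt s (ρ s) (X i)) (piKronecker ρ) +
      covMat (fun i => X i - condExpAt s (ρ s) (X i)) (piKronecker ρ) := by
  ext i j
  simp only [covMat, of_apply, Matrix.add_apply, sub_mul, mul_sub, trace_sub,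
    trace_condExpAt_mul hρ]
  rw [trace_condExpAt_mul_mul hρ (X i) (X j), trace_mul_condExpAt_mul hρ (X i) (X j)]
  ring

lemma covMat_piKronecker_eq_zero (hρ : ∀ s, (ρ s).trace = 1)
    {X : ι → Matrix (∀ s, α s) (∀ s, α s) ℂ} (hX : ∀ s i, ActsTriviallyAt s (X i)) :
    covMat X (piKronecker ρ) = 0 := by
  classical
  choose c hc using fun i => exists_eq_smul_one_of_actsTriviallyAt fun s => hX s i
  rw [funext hc]
  exact covMat_smul_one (by simp only [trace_piKronecker, hρ, Finset.prod_const_one]) c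

lemma exists_covMat_eq_sum_of_actsTriviallyAt (hρ : ∀ s, IsDensity (ρ s)) (F : Finset S)
    {X : ι → Matrix (∀ s, α s) (∀ s, α s) ℂ} (hX : ∀ i, (X i).IsHermitian)
    (hF : ∀ s ∉ F, ∀ i, ActsTriviallyAt s (X i)) :
    ∃ T : S → Matrix ι ι ℂ, (∀ s, (T s).PosSemidef) ∧
      (∀ s i j, ActsTriviallyAt s (X i) ∨ ActsTriviallyAt s (X j) → T s i j = 0) ∧
      covMat X (piKronecker ρ) = ∑ s ∈ F, T s := by
  classical
  induction F using Finset.induction_on generalizing X with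
  | empty =>
    refine ⟨0, fun _ => .zero, fun _ _ _ _ => rfl, ?_⟩
    rw [Finset.sum_empty, covMat_piKronecker_eq_zero (fun s => (hρ s).2) fun s =>
      hF s (Finset.notMem_empty s)]
  | insert s F hs ih =>
    let Y i := condExpAt s (ρ s) (X i)
    have hY i : (Y i).IsHermitian := isHermitian_condExpAt (hρ s).1.isHermitian (hX i)
    have hYX t i (h : ActsTriviallyAt t (X i)) : ActsTriviallyAt t (Y i) := h.condExpAt s (ρ s)
    have hYF : ∀ t ∉ F, ∀ i, ActsTriviallyAt t (Y i) := by
      intro t ht i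
      rcases eq_or_ne t s with rfl | hts
      · exact actsTriviallyAt_condExpAt t _ _
      · exact hYX t i (hF t (by simp [hts, ht]) i)
    let Z i := X i - Y i
    have hZ i (h : ActsTriviallyAt s (X i)) : Z i = 0 :=
      sub_eq_zero.2 (h.condExpAt_eq_self (hρ s).2).symm
    obtain ⟨T, hT, hsupp, hsum⟩ := ih hY hYF
    refine ⟨update T s (covMat Z (piKronecker ρ)), fun t => ?_, fun t i j h => ?_, ?_⟩
    · rcases eq_or_ne t s with rfl | hts
      · rw [update_self]
        exact posSemidef_covMat (isDensity_piKronecker hρ) fun i => (hX i).sub (hY i)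
      · rw [update_of_ne hts]
        exact hT t
    · rcases eq_or_ne t s with rfl | hts
      · rw [update_self]
        exact covMat_apply_of_eq_zero (h.imp (hZ i) (hZ j)) _
      · rw [update_of_ne hts]
        exact hsupp t i j (h.imp (hYX t i) (hYX t j))
    · rw [covMat_eq_covMat_condExpAt_add s (hρ s).2, hsum, Finset.sum_insert hs, update_self,
        Finset.sum_update_of_notMem hs, add_comm]

theorem stmt17_general {V : Type*} [DecidableEq V] {κ : V → Type*} {N : S → Set V}
    [∀ s, DecidablePred (· ∈ N s)] (hρ : ∀ s, IsDensity (ρ s))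
    (hncds : ∀ s t, s ≠ t → ∀ x y, x ≠ y → ¬(x ∈ N s ∧ y ∈ N s ∧ x ∈ N t ∧ y ∈ N t))
    {X : (Σ x, κ x) → Matrix (∀ s, α s) (∀ s, α s) ℂ} (hX : ∀ p, (X p).IsHermitian)
    (hloc : ∀ s p, p.1 ∉ N s → ActsTriviallyAt s (X p))
    {Γ : Matrix (Σ x, κ x) (Σ x, κ x) ℂ} (hΓ : Γ = covMat X (piKronecker ρ)) :
    (∀ x y, x ≠ y → (∀ s, ¬(x ∈ N s ∧ y ∈ N s)) → ∀ i j, Γ ⟨x, i⟩ ⟨y, j⟩ = 0) ∧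
    ∃ Υ : ∀ (_ : S) (x : V), Matrix (κ x) (κ x) ℂ,
      (∀ s x, x ∈ N s → (Υ s x).IsHermitian) ∧
      ∃ T : S → Matrix (Σ x, κ x) (Σ x, κ x) ℂ,
        (∀ s, T s = of fun p q =>
          if h : p.1 = q.1 then
            (if p.1 ∈ N s then Υ s p.1 p.2 (cast (congrArg κ h.symm) q.2) else 0)
          else
            (if p.1 ∈ N s ∧ q.1 ∈ N s then Γ p q else 0)) ∧
        Γ = ∑ s, T s ∧
        ∀ s, (T s).PosSemidef := by
  obtain ⟨T, hT, hsupp, hsum⟩ :=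
    exists_covMat_eq_sum_of_actsTriviallyAt hρ Finset.univ hX (by simp)
  rw [← hΓ] at hsum
  have hT0 s p q (h : ¬(p.1 ∈ N s ∧ q.1 ∈ N s)) : T s p q = 0 :=
    hsupp s p q ((not_and_or.1 h).imp (hloc s p) (hloc s q))
  have hΓ_apply p q : Γ p q = ∑ s, T s p q := by rw [hsum, Matrix.sum_apply]
  have hΓ_eq {s p q} (hpq : p.1 ≠ q.1) (hs : p.1 ∈ N s ∧ q.1 ∈ N s) : Γ p q = T s p q := by
    rw [hΓ_apply]
    exact Fintype.sum_eq_single s fun t hts =>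
      hT0 t p q fun ht => hncds s t hts.symm _ _ hpq ⟨hs.1, hs.2, ht.1, ht.2⟩
  refine ⟨fun x y _ h i j => ?_, fun s x => (T s).submatrix (Sigma.mk x) (Sigma.mk x),
    fun s x _ => (hT s).isHermitian.submatrix _, T, fun s => ?_, hsum, hT⟩
  · rw [hΓ_apply]
    exact Finset.sum_eq_zero fun s _ => hT0 s _ _ (h s)
  · ext ⟨x, i⟩ ⟨y, j⟩
    simp only [of_apply]
    split_ifs with hxy hx hs
    · cases hxy
      rfl
    · exact hT0 s _ _ fun h => hx h.1
    · exact (hΓ_eq hxy hs).symm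
    · exact hT0 s _ _ hs

end CovarianceDecomposition

section EmbedNode

variable {N nS d : ℕ} {Ns : Fin nS → Finset (Fin N)} {x : Fin N}

lemma actsTriviallyAt_embedNode {s : Fin nS} (hx : x ∉ Ns s)
    (M : Matrix (NIdx Ns d x) (NIdx Ns d x) ℂ) : ActsTriviallyAt s (embedNode Ns x M) where
  apply_eq_zero i j h :=
    if_neg fun H => h (funext fun y => H s y fun hy => hx (hy ▸ y.2))
  apply_update_update i j a h := by
    have hne (t : {t : Fin nS // x ∈ Ns t}) : t.1 ≠ s := fun ht => hx (ht ▸ t.2)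
    have hagree (t : Fin nS) (y : Ns t) :
        update i s a t y = update j s a t y ↔ i t y = j t y := by
      rcases eq_or_ne t s with rfl | hts
      · simp only [update_self, h]
      · simp only [update_of_ne hts]
    simp only [embedNode, of_apply, hagree, update_of_ne (hne _)]

lemma isHermitian_embedNode {M : Matrix (NIdx Ns d x) (NIdx Ns d x) ℂ} (hM : M.IsHermitian) :
    (embedNode Ns x M).IsHermitian := by
  ext i j
  simp only [embedNode, of_apply, conjTranspose_apply, eq_comm (a := j _ _), apply_ite star,
    hM.apply, star_zero]

end EmbedNode

/-- Block decomposition for covariance matrices of basic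
no-common-double-source network states: off-diagonal blocks between
unconnected nodes vanish, and `Γ = Σ_s T_s` where each `T_s` is positive
semidefinite, carries the off-diagonal blocks `γ_{xy}` for `{x,y} ⊆ N(s)`,
has (Hermitian) diagonal blocks `Υ_x^s` for `x ∈ N(s)`, and vanishes
elsewhere. -/
theorem stmt17 {N nS d : ℕ} (hN : 1 ≤ N) (hd : 1 ≤ d)
    (Ns : Fin nS → Finset (Fin N))
    (ρs : ∀ s : Fin nS, Matrix (↥(Ns s) → Fin d) (↥(Ns s) → Fin d) ℂ)
    (hρs : ∀ s, IsDensity (ρs s))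
    -- every node belongs to at least one source
    (hcover : ∀ x : Fin N, ∃ s, x ∈ Ns s)
    -- no-common-double-source condition
    (hncds : ∀ s t : Fin nS, s ≠ t → ∀ x y : Fin N, x ≠ y →
      ¬(x ∈ Ns s ∧ y ∈ Ns s ∧ x ∈ Ns t ∧ y ∈ Ns t))
    (k : Fin N → ℕ)
    (A : ∀ x : Fin N, Fin (k x) → Matrix (NIdx Ns d x) (NIdx Ns d x) ℂ)
    (hA : ∀ x i, (A x i).IsHermitian)
    (Γ : Matrix (Σ x : Fin N, Fin (k x)) (Σ x : Fin N, Fin (k x)) ℂ)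
    (hΓ : Γ = covMat (fun p : Σ x : Fin N, Fin (k x) => embedNode Ns p.1 (A p.1 p.2))
      (networkState Ns ρs)) :
    -- off-diagonal blocks between nodes sharing no source vanish
    (∀ x y : Fin N, x ≠ y → (∀ s, ¬(x ∈ Ns s ∧ y ∈ Ns s)) →
      ∀ (i : Fin (k x)) (j : Fin (k y)), Γ ⟨x, i⟩ ⟨y, j⟩ = 0) ∧
    -- block decomposition
    ∃ Υ : ∀ (_ : Fin nS) (x : Fin N), Matrix (Fin (k x)) (Fin (k x)) ℂ,
      (∀ s x, x ∈ Ns s → (Υ s x).IsHermitian) ∧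
      ∃ T : Fin nS → Matrix (Σ x : Fin N, Fin (k x)) (Σ x : Fin N, Fin (k x)) ℂ,
        (∀ s, T s = Matrix.of fun p q =>
          if h : p.1 = q.1 then
            (if p.1 ∈ Ns s then Υ s p.1 p.2 (Fin.cast (congrArg k h.symm) q.2) else 0)
          else
            (if p.1 ∈ Ns s ∧ q.1 ∈ Ns s then Γ p q else 0)) ∧
        Γ = ∑ s, T s ∧
        ∀ s, (T s).PosSemidef := by
  simpa only [Fin.cast_eq_cast, Finset.mem_coe] using
    stmt17_general (κ := fun x => Fin (k x)) (N := fun s => (Ns s : Set (Fin N))) hρs hncds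
      (fun p => isHermitian_embedNode (hA p.1 p.2))
      (fun _ p hp => actsTriviallyAt_embedNode hp _) hΓ
end
end
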